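/- Let $k$ be a field of characteristic zero and let $V$ be a cosimplicial complex of $k$-vector spaces, i.e. a functor $[n]\mapsto V^n$ from the simplex category $\Delta$ to $\mathbb{Z}$-graded cochain complexes of $k$-vector spaces; write $V^{n,i}$ for the degree-$i$ component of $V^n$ and $V^{\bullet,i}$ for the cosimplicial vector space $[n]\mapsto V^{n,i}$. For a cosimplicial vector space $W$, let $H^j(W)$ denote the cohomology of the cochain complex $W^0\to W^1\to\cdots$ with differential $\partial^n=\sum_{r=0}^{n+1}(-1)^r\partial^n_r$, where $\partial^n_r\colon W^n\to W^{n+1}$ are the coface maps. Let $\ker(V^0\rightrightarrows V^1)\subset V^0$ be the subcomplex on which the two coface maps $V^0\to V^1$ agree. Let $\Omega_n$ be the differential graded commutative $k$-algebra generated by $t_0,\dots,t_n$ in degree $0$ and $dt_0,\dots,dt_n$ in degree $1$ subject to $\sum_i t_i=1$ and $\sum_i dt_i=0$, with differential determined by $t_i\mapsto dt_i$; a morphism $f\colon[p]\to[q]$ of $\Delta$ induces $\Omega(f)\colon\Omega_q\to\Omega_p$, $t_j\mapsto\sum_{f(i)=j}t_i$. Let $\mathrm{Tot}(V)$ be the complex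 whose degree-$m$ part is the space of families $(a_n)_{n\ge 0}\in\prod_n(\Omega_n\otimes_k V^n)^m$, where $(\Omega_n\otimes_k V^n)^m=\bigoplus_{r+i=m}\Omega_n^r\otimes_k V^{n,i}$, such that $(\mathrm{Id}\otimes V(f))(a_p)=(\Omega(f)\otimes\mathrm{Id})(a_q)$ for every $f\colon[p]\to[q]$ in $\Delta$, with differential $d\otimes 1+(-1)^r\,1\otimes d$ on $\Omega_n^r\otimes V^{n,i}$. Suppose that 1. there exists $M\in\mathbb{Z}$ such that $V^{n,i}=0$ for all $i<M$ and all $n\ge 0$; 2. $H^j(V^{\bullet,i})=0$ for all $i\in\mathbb{Z}$ and all $j\neq 0$. Then the canonical map of complexes $\ker(V^0\rightrightarrows V^1)\to\mathrm{Tot}(V)$, which sends $a$ to the family $(1\otimes a_n)_n$, where $a_n\in V^n$ is the image of $a$ under $V(g)$ for any morphism $g\colon[0]\to[n]$ (the image does not depend on $g$), is a quasiisomorphism. -/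

import Mathlib

open CategoryTheory TensorProduct

universe u w

noncomputable section

namespace PolyDeRham

variable (k : Type u) [Field k]

/-- The ideal of `k[t₀,…,tₙ]` generated by `t₀ + ⋯ + tₙ - 1`. -/
def relIdeal (n : ℕ) : Ideal (MvPolynomial (Fin (n + 1)) k) :=
  Ideal.span {∑ i, MvPolynomial.X i - 1}

/-- Polynomial functions on the `n`-simplex: `k[t₀,…,tₙ] / (t₀ + ⋯ + tₙ - 1)`. -/
def Fun (n : ℕ) : Type u := MvPolynomial (Fin (n + 1)) k ⧸ relIdeal k n

instance (n : ℕ) : CommRing (Fun k n) :=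
  inferInstanceAs (CommRing (MvPolynomial (Fin (n + 1)) k ⧸ relIdeal k n))

instance (n : ℕ) : Algebra k (Fun k n) :=
  inferInstanceAs (Algebra k (MvPolynomial (Fin (n + 1)) k ⧸ relIdeal k n))

/-- The vector space generated by `dt₀,…,dtₙ` subject to `dt₀ + ⋯ + dtₙ = 0`; the class of the
`i`-th basis vector is `dtᵢ`. -/
def Cov (n : ℕ) : Type u :=
  (Fin (n + 1) → k) ⧸ Submodule.span k {(fun _ => 1 : Fin (n + 1) → k)}

instance (n : ℕ) : AddCommGroup (Cov k n) :=
  inferInstanceAs (AddCommGroup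
    ((Fin (n + 1) → k) ⧸ Submodule.span k {(fun _ => 1 : Fin (n + 1) → k)}))

instance (n : ℕ) : Module k (Cov k n) :=
  inferInstanceAs (Module k
    ((Fin (n + 1) → k) ⧸ Submodule.span k {(fun _ => 1 : Fin (n + 1) → k)}))

variable {k}

/-- The class of a polynomial in `t₀,…,tₙ`. -/
def poly {n : ℕ} : MvPolynomial (Fin (n + 1)) k →ₐ[k] Fun k n :=
  Ideal.Quotient.mkₐ k (relIdeal k n)

/-- The class of `∑ᵢ cᵢ dtᵢ` for a coefficient vector `c`. -/
def cov {n : ℕ} : (Fin (n + 1) → k) →ₗ[k] Cov k n :=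
  Submodule.mkQ (Submodule.span k {(fun _ => 1 : Fin (n + 1) → k)})

/-- The generator `dtᵢ`. -/
def dt {n : ℕ} (i : Fin (n + 1)) : Cov k n := cov (Pi.single i 1)

variable (k)

/-- The degree-`p` part of `Ωₙ`. The graded commutative algebra generated by `t₀,…,tₙ` in degree `0`
and `dt₀,…,dtₙ` in degree `1` subject to `∑ tᵢ = 1` and `∑ dtᵢ = 0` is the tensor product of the
commutative algebra `Fun k n` on the `tᵢ` and the exterior algebra of `Cov k n` on the `dtᵢ`. -/
def Form (n p : ℕ) : Type u := Fun k n ⊗[k] ⋀[k]^p (Cov k n)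

instance (n p : ℕ) : AddCommGroup (Form k n p) :=
  inferInstanceAs (AddCommGroup (Fun k n ⊗[k] ⋀[k]^p (Cov k n)))

instance (n p : ℕ) : Module k (Form k n p) :=
  inferInstanceAs (Module k (Fun k n ⊗[k] ⋀[k]^p (Cov k n)))

variable {k}

/-- The identification of `Form k n p` with its definition. -/
def Form.toTensor {n p : ℕ} : Form k n p ≃ₗ[k] Fun k n ⊗[k] ⋀[k]^p (Cov k n) :=
  LinearEquiv.refl k _

/-- The form `f ω = f ⊗ ω`, for a function `f` and a constant-coefficient form `ω`. -/
def Form.mk {n p : ℕ} : Fun k n →ₗ[k] ⋀[k]^p (Cov k n) →ₗ[k] Form k n p :=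
  (TensorProduct.mk k (Fun k n) (⋀[k]^p (Cov k n))).compr₂ Form.toTensor.symm.toLinearMap

lemma sum_dt (n : ℕ) : ∑ i, (dt i : Cov k n) = 0 := by
  simp only [dt]
  rw [← map_sum, Finset.univ_sum_single (fun _ : Fin (n + 1) => (1 : k))]
  exact (Submodule.Quotient.mk_eq_zero _).mpr (Submodule.mem_span_singleton_self _)

/-- Left multiplication `ω ↦ v ∧ ω` on exterior powers. -/
def wedge {M : Type u} [AddCommGroup M] [Module k M] (p : ℕ) (v : M) :
    ⋀[k]^p M →ₗ[k] ⋀[k]^(p + 1) M :=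
  (LinearMap.mulLeft k (ExteriorAlgebra.ι k v)).restrict (fun x hx => by
    rw [LinearMap.mulLeft_apply]
    change _ ∈ LinearMap.range (ExteriorAlgebra.ι k) ^ (p + 1)
    rw [pow_succ']
    exact Submodule.mul_mem_mul ⟨v, rfl⟩ hx)

lemma wedge_coe {M : Type u} [AddCommGroup M] [Module k M] (p : ℕ) (v : M) (x : ⋀[k]^p M) :
    (wedge p v x : ExteriorAlgebra k M) = ExteriorAlgebra.ι k v * x := rfl

/-- `wedge` as a bilinear map. -/
def wedgeₗ (M : Type u) [AddCommGroup M] [Module k M] (p : ℕ) :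
    M →ₗ[k] ⋀[k]^p M →ₗ[k] ⋀[k]^(p + 1) M where
  toFun := wedge p
  map_add' v w := by ext x; simp [wedge_coe, add_mul]
  map_smul' c v := by ext x; simp [wedge_coe]

lemma wedge_wedge_add {M : Type u} [AddCommGroup M] [Module k M] (p : ℕ) (v w : M)
    (x : ⋀[k]^p M) : wedge (p + 1) v (wedge p w x) + wedge (p + 1) w (wedge p v x) = 0 := by
  apply Subtype.ext
  simp only [Submodule.coe_add, wedge_coe, ← mul_assoc, ← add_mul,
    ExteriorAlgebra.ι_add_mul_swap, zero_mul, Submodule.coe_zero]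

lemma wedge_wedge_self {M : Type u} [AddCommGroup M] [Module k M] (p : ℕ) (v : M)
    (x : ⋀[k]^p M) : wedge (p + 1) v (wedge p v x) = 0 := by
  apply Subtype.ext
  rw [wedge_coe, wedge_coe, ← mul_assoc, ExteriorAlgebra.ι_sq_zero, zero_mul]
  rfl

lemma map_coe {M N : Type u} [AddCommGroup M] [Module k M] [AddCommGroup N] [Module k N]
    (p : ℕ) (g : M →ₗ[k] N) (x : ⋀[k]^p M) :
    (exteriorPower.map p g x : ExteriorAlgebra k N) = ExteriorAlgebra.map g x := by
  have : (Submodule.subtype _) ∘ₗ exteriorPower.map p g =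
      (ExteriorAlgebra.map g).toLinearMap ∘ₗ Submodule.subtype (⋀[k]^p M) := by
    apply exteriorPower.linearMap_ext
    ext v
    simp [exteriorPower.map_apply_ιMulti, ExteriorAlgebra.map_apply_ιMulti]
  exact LinearMap.congr_fun this x

lemma map_wedge {M N : Type u} [AddCommGroup M] [Module k M] [AddCommGroup N] [Module k N]
    (p : ℕ) (g : M →ₗ[k] N) (v : M) (x : ⋀[k]^p M) :
    exteriorPower.map (p + 1) g (wedge p v x) = wedge p (g v) (exteriorPower.map p g x) := by
  apply Subtype.ext
  simp [wedge_coe, map_coe]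

/-- The total differential of polynomial functions, `f ↦ ∑ᵢ (∂f/∂tᵢ) dtᵢ`, before passing to the
quotient by `t₀ + ⋯ + tₙ = 1`. -/
def gradPoly (n : ℕ) : MvPolynomial (Fin (n + 1)) k →ₗ[k] Fun k n ⊗[k] Cov k n :=
  ∑ i, (TensorProduct.mk k (Fun k n) (Cov k n)).flip (dt i) ∘ₗ
    (poly (k := k) (n := n)).toLinearMap ∘ₗ (MvPolynomial.pderiv i).toLinearMap

lemma gradPoly_apply {n : ℕ} (f : MvPolynomial (Fin (n + 1)) k) :
    gradPoly n f = ∑ i, poly (MvPolynomial.pderiv i f) ⊗ₜ[k] (dt i : Cov k n) := by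
  simp [gradPoly, LinearMap.sum_apply]

lemma gradPoly_mem {n : ℕ} (f : MvPolynomial (Fin (n + 1)) k) (hf : f ∈ relIdeal k n) :
    gradPoly n f = 0 := by
  obtain ⟨g, rfl⟩ := Ideal.mem_span_singleton'.mp hf
  have h0 : poly (∑ i, MvPolynomial.X i - 1 : MvPolynomial (Fin (n + 1)) k) = 0 :=
    Ideal.Quotient.eq_zero_iff_mem.mpr (Ideal.subset_span rfl)
  have h1 (i : Fin (n + 1)) : MvPolynomial.pderiv i
      (∑ j, MvPolynomial.X j - 1 : MvPolynomial (Fin (n + 1)) k) = 1 := by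
    simp [map_sum, MvPolynomial.pderiv_X, Pi.single_apply]
  rw [gradPoly_apply]
  have h2 (i : Fin (n + 1)) : poly (MvPolynomial.pderiv i
      (g * (∑ j, MvPolynomial.X j - 1 : MvPolynomial (Fin (n + 1)) k))) = poly g := by
    rw [Derivation.leibniz, h1, map_add, smul_eq_mul, smul_eq_mul, map_mul, map_mul, h0]
    simp
  simp only [h2]
  rw [← TensorProduct.tmul_sum, sum_dt, TensorProduct.tmul_zero]

/-- The total differential of polynomial functions on the simplex, `f ↦ ∑ᵢ (∂f/∂tᵢ) dtᵢ`. -/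
def grad (n : ℕ) : Fun k n →ₗ[k] Fun k n ⊗[k] Cov k n :=
  Submodule.liftQ ((relIdeal k n).restrictScalars k) (gradPoly n) gradPoly_mem

lemma grad_poly {n : ℕ} (f : MvPolynomial (Fin (n + 1)) k) :
    grad n (poly f) = ∑ i, poly (MvPolynomial.pderiv i f) ⊗ₜ[k] (dt i : Cov k n) :=
  gradPoly_apply f

variable (k) in
/-- The de Rham differential `f ω ↦ ∑ᵢ (∂f/∂tᵢ) dtᵢ ∧ ω`. It sends `tᵢ` to `dtᵢ`, it kills every
`dtᵢ`, and it satisfies the Leibniz rule. -/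
def deRham (n p : ℕ) : Form k n p →ₗ[k] Form k n (p + 1) :=
  Form.toTensor.symm.toLinearMap ∘ₗ
    (TensorProduct.lift (wedgeₗ (Cov k n) p)).lTensor (Fun k n) ∘ₗ
      (TensorProduct.assoc k (Fun k n) (Cov k n) (⋀[k]^p (Cov k n))).toLinearMap ∘ₗ
        (grad n).rTensor (⋀[k]^p (Cov k n)) ∘ₗ Form.toTensor.toLinearMap

lemma deRham_mk {n p : ℕ} (f : MvPolynomial (Fin (n + 1)) k) (x : ⋀[k]^p (Cov k n)) :
    deRham k n p (Form.mk (poly f) x) =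
      ∑ i, Form.mk (poly (MvPolynomial.pderiv i f)) (wedge p (dt i) x) := by
  simp only [deRham, Form.mk, LinearMap.compr₂_apply, TensorProduct.mk_apply, LinearMap.comp_apply,
    LinearEquiv.coe_coe, LinearEquiv.apply_symm_apply, LinearMap.rTensor_tmul, grad_poly,
    TensorProduct.sum_tmul, map_sum, TensorProduct.assoc_tmul,
    LinearMap.lTensor_tmul, TensorProduct.lift.tmul]
  rfl

lemma form_ext {n p : ℕ} {P : Type*} [AddCommGroup P] [Module k P] {g h : Form k n p →ₗ[k] P}
    (H : ∀ f x, g (Form.mk (poly f) x) = h (Form.mk (poly f) x)) : g = h := by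
  have : g ∘ₗ Form.toTensor.symm.toLinearMap = h ∘ₗ Form.toTensor.symm.toLinearMap := by
    apply TensorProduct.ext'
    intro f x
    obtain ⟨f, rfl⟩ := Ideal.Quotient.mkₐ_surjective k (relIdeal k n) f
    exact H f x
  exact LinearMap.ext fun x => LinearMap.congr_fun this x

lemma pderiv_comm {n : ℕ} (i j : Fin (n + 1)) (f : MvPolynomial (Fin (n + 1)) k) :
    MvPolynomial.pderiv i (MvPolynomial.pderiv j f) =
      MvPolynomial.pderiv j (MvPolynomial.pderiv i f) := by
  have h : ⁅(MvPolynomial.pderiv i : Derivation k (MvPolynomial (Fin (n + 1)) k) _),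
      (MvPolynomial.pderiv j : Derivation k (MvPolynomial (Fin (n + 1)) k) _)⁆ = 0 := by
    apply MvPolynomial.derivation_ext
    intro l
    simp [Derivation.commutator_apply, MvPolynomial.pderiv_X, Pi.single_apply, apply_ite]
  have := DFunLike.congr_fun h f
  rwa [Derivation.commutator_apply, Derivation.zero_apply, sub_eq_zero] at this

lemma deRham_comp_deRham (n p : ℕ) : deRham k n (p + 1) ∘ₗ deRham k n p = 0 := by
  apply form_ext
  intro f x
  rw [LinearMap.comp_apply, deRham_mk, map_sum]
  simp only [deRham_mk, LinearMap.zero_apply]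
  rw [← Finset.sum_product']
  refine Finset.sum_involution (fun a _ => (a.2, a.1)) ?_ ?_ (by simp) (by simp)
  · rintro ⟨i, j⟩ -
    rw [pderiv_comm i j, ← map_add, wedge_wedge_add, map_zero]
  · rintro ⟨i, j⟩ - h hij
    obtain rfl : j = i := congrArg Prod.fst hij
    exact h (by rw [wedge_wedge_self, map_zero])

/-- The pullback of polynomial functions along `f : [p] → [q]`, `t_j ↦ ∑_{f(i) = j} t_i`. -/
def pullPoly {p q : ℕ} (f : Fin (p + 1) → Fin (q + 1)) :
    MvPolynomial (Fin (q + 1)) k →ₐ[k] MvPolynomial (Fin (p + 1)) k :=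
  MvPolynomial.aeval fun j => ∑ i with f i = j, MvPolynomial.X i

lemma pullPoly_mem {p q : ℕ} (f : Fin (p + 1) → Fin (q + 1)) :
    relIdeal k q ≤ (relIdeal k p).comap (pullPoly f) := by
  rw [relIdeal, Ideal.span_le, Set.singleton_subset_iff]
  have : pullPoly f (∑ j, MvPolynomial.X j - 1 : MvPolynomial (Fin (q + 1)) k) =
      ∑ i, MvPolynomial.X i - 1 := by
    simp only [pullPoly, map_sub, map_sum, MvPolynomial.aeval_X, map_one]
    rw [Finset.sum_fiberwise]
  change pullPoly f _ ∈ relIdeal k p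
  rw [this]
  exact Ideal.subset_span rfl

/-- The pullback `Ω_q⁰ → Ω_p⁰`, `t_j ↦ ∑_{f(i) = j} t_i`. -/
def pullFun {p q : ℕ} (f : Fin (p + 1) → Fin (q + 1)) : Fun k q →ₐ[k] Fun k p :=
  Ideal.quotientMapₐ (relIdeal k p) (pullPoly f) (pullPoly_mem f)

/-- The pullback of covectors `dt_j ↦ ∑_{f(i) = j} dt_i`. In terms of coefficient vectors it is
precomposition with `f`. -/
def pullCov {p q : ℕ} (f : Fin (p + 1) → Fin (q + 1)) : Cov k q →ₗ[k] Cov k p :=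
  Submodule.mapQ _ _ (LinearMap.funLeft k k f) (by
    rw [Submodule.span_le, Set.singleton_subset_iff]
    exact Submodule.subset_span rfl)

lemma pullCov_dt {p q : ℕ} (f : Fin (p + 1) → Fin (q + 1)) (j : Fin (q + 1)) :
    (pullCov f : Cov k q →ₗ[k] Cov k p) (dt j) = ∑ i with f i = j, dt i := by
  simp only [dt]
  rw [← map_sum]
  change cov (LinearMap.funLeft k k f _) = _
  congr 1
  ext l
  simp [LinearMap.funLeft_apply, Finset.sum_apply, Pi.single_apply, Finset.sum_ite_eq]

/-- The structure map `Ω(f) : Ω_q → Ω_p` in form degree `r`. -/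
def pull {p q : ℕ} (r : ℕ) (f : Fin (p + 1) → Fin (q + 1)) : Form k q r →ₗ[k] Form k p r :=
  Form.toTensor.symm.toLinearMap ∘ₗ
    TensorProduct.map (pullFun f).toLinearMap (exteriorPower.map r (pullCov f)) ∘ₗ
      Form.toTensor.toLinearMap

lemma pull_mk {p q : ℕ} (r : ℕ) (f : Fin (p + 1) → Fin (q + 1))
    (g : Fun k q) (x : ⋀[k]^r (Cov k q)) :
    pull r f (Form.mk g x) = Form.mk (pullFun f g) (exteriorPower.map r (pullCov f) x) := rfl

lemma pullFun_poly {p q : ℕ} (f : Fin (p + 1) → Fin (q + 1))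
    (g : MvPolynomial (Fin (q + 1)) k) : pullFun f (poly g) = poly (pullPoly f g) := rfl

lemma pderiv_pullPoly {p q : ℕ} (f : Fin (p + 1) → Fin (q + 1)) (i : Fin (p + 1))
    (g : MvPolynomial (Fin (q + 1)) k) :
    MvPolynomial.pderiv i (pullPoly f g) = pullPoly f (MvPolynomial.pderiv (f i) g) := by
  induction g using MvPolynomial.induction_on with
  | C a => simp [pullPoly, MvPolynomial.algebraMap_eq]
  | add a b ha hb => simp [ha, hb]
  | mul_X a j ha =>
    have hX : MvPolynomial.pderiv i (pullPoly f (MvPolynomial.X j : MvPolynomial _ k)) =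
        pullPoly f (MvPolynomial.pderiv (f i) (MvPolynomial.X j)) := by
      simp only [pullPoly, MvPolynomial.aeval_X, map_sum, MvPolynomial.pderiv_X,
        Pi.single_apply, apply_ite, map_one, map_zero]
      simp [Finset.sum_ite_eq, eq_comm]
    rw [map_mul, MvPolynomial.pderiv_mul, MvPolynomial.pderiv_mul, ha, hX, map_add, map_mul,
      map_mul]

lemma pull_deRham {p q : ℕ} (r : ℕ) (f : Fin (p + 1) → Fin (q + 1)) :
    pull (r + 1) f ∘ₗ deRham k q r = deRham k p r ∘ₗ pull r f := by
  apply form_ext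
  intro g x
  rw [LinearMap.comp_apply, LinearMap.comp_apply, deRham_mk, map_sum, pull_mk, pullFun_poly,
    deRham_mk]
  simp only [pull_mk, pullFun_poly, map_wedge, pullCov_dt, pderiv_pullPoly]
  have h (j : Fin (q + 1)) (y : ⋀[k]^r (Cov k p)) :
      wedge r (∑ i with f i = j, (dt i : Cov k p)) y = ∑ i with f i = j, wedge r (dt i) y := by
    change wedgeₗ _ r _ y = _
    rw [map_sum, LinearMap.sum_apply]
    rfl
  simp only [h, map_sum]
  rw [← Finset.sum_fiberwise (g := f)]
  refine Finset.sum_congr rfl fun j _ => Finset.sum_congr rfl fun i hi => ?_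
  rw [(Finset.mem_filter.mp hi).2]

variable (k) in
/-- The unit `1 ∈ Ωₙ⁰`; the empty wedge product is the unit of the exterior algebra. -/
def unit (n : ℕ) : Form k n 0 := Form.mk 1 (exteriorPower.ιMulti k 0 Fin.elim0)

lemma pull_unit {p q : ℕ} (f : Fin (p + 1) → Fin (q + 1)) : pull 0 f (unit k q) = unit k p := by
  rw [unit, pull_mk, map_one, exteriorPower.map_apply_ιMulti, unit,
    Subsingleton.elim (_ ∘ _) (Fin.elim0 : Fin 0 → Cov k p)]

lemma deRham_unit (n : ℕ) : deRham k n 0 (unit k n) = 0 := by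
  have h : (1 : Fun k n) = poly 1 := (map_one _).symm
  rw [unit, h, deRham_mk]
  simp

/-- There are no forms of degree larger than the dimension of the simplex. -/
lemma form_subsingleton {n p : ℕ} (h : n < p) : Subsingleton (Form k n p) := by
  have hW : Module.finrank k (Cov k n) = n := by
    have h1 := Submodule.finrank_quotient_add_finrank
      (Submodule.span k {(fun _ => 1 : Fin (n + 1) → k)})
    rw [finrank_span_singleton (fun h => one_ne_zero (congrFun h 0)), Module.finrank_fin_fun] at h1
    exact Nat.add_right_cancel h1
  have hF : Module.Finite k (Cov k n) :=
    inferInstanceAs (Module.Finite k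
      ((Fin (n + 1) → k) ⧸ Submodule.span k {(fun _ => 1 : Fin (n + 1) → k)}))
  have h2 : Subsingleton (⋀[k]^p (Cov k n)) := by
    apply Module.finrank_zero_iff (R := k).mp
    rw [exteriorPower.finrank_eq, hW, Nat.choose_eq_zero_of_lt h]
  exact inferInstanceAs (Subsingleton (Fun k n ⊗[k] ⋀[k]^p (Cov k n)))

end PolyDeRham

namespace CosimplicialTot

open PolyDeRham

variable {k : Type u} [Field k]
  (V : CosimplicialObject (CochainComplex (ModuleCat.{max u w} k) ℤ))

/-- The component `V^{n,i}`. -/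
abbrev comp (n : ℕ) (i : ℤ) : ModuleCat.{max u w} k := (V.obj (SimplexCategory.mk n)).X i

/-- The differential `V^{n,i} → V^{n,j}` of the complex `Vⁿ`. -/
abbrev dV (n : ℕ) (i j : ℤ) : comp V n i →ₗ[k] comp V n j :=
  ((V.obj (SimplexCategory.mk n)).d i j).hom

/-- The map `V(f) : V^{p,i} → V^{q,i}`. -/
abbrev mapV {p q : ℕ} (f : SimplexCategory.mk p ⟶ SimplexCategory.mk q) (i : ℤ) :
    comp V p i →ₗ[k] comp V q i :=
  ((V.map f).f i).hom

/-- The underlying map of sets of a morphism `[p] → [q]` in `Δ`. -/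
abbrev fn {p q : ℕ} (f : SimplexCategory.mk p ⟶ SimplexCategory.mk q) :
    Fin (p + 1) → Fin (q + 1) := f.toOrderHom

/-- The equalizer of the two coface maps `V^{0,i} → V^{1,i}`. -/
def kerSub (i : ℤ) : Submodule k (comp V 0 i) :=
  LinearMap.eqLocus ((V.δ (0 : Fin 2)).f i).hom ((V.δ (1 : Fin 2)).f i).hom

lemma dV_mapV {p q : ℕ} (f : SimplexCategory.mk p ⟶ SimplexCategory.mk q) (i j : ℤ)
    (x : comp V p i) : dV V q i j (mapV V f i x) = mapV V f j (dV V p i j x) :=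
  LinearMap.congr_fun (congrArg ModuleCat.Hom.hom ((V.map f).comm i j)) x

lemma mapV_comp {p q r : ℕ} (f : SimplexCategory.mk p ⟶ SimplexCategory.mk q)
    (g : SimplexCategory.mk q ⟶ SimplexCategory.mk r) (i : ℤ) (x : comp V p i) :
    mapV V (f ≫ g) i x = mapV V g i (mapV V f i x) :=
  LinearMap.congr_fun (congrArg (fun h => ModuleCat.Hom.hom (HomologicalComplex.Hom.f h i))
    (V.map_comp f g)) x

lemma dV_dV (n : ℕ) (i j l : ℤ) (x : comp V n i) : dV V n j l (dV V n i j x) = 0 :=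
  LinearMap.congr_fun (congrArg ModuleCat.Hom.hom
    ((V.obj (SimplexCategory.mk n)).d_comp_d i j l)) x

lemma kerSub_d (i j : ℤ) (x : comp V 0 i) (hx : x ∈ kerSub V i) : dV V 0 i j x ∈ kerSub V j := by
  have h : mapV V (SimplexCategory.δ (0 : Fin 2)) i x =
    mapV V (SimplexCategory.δ (1 : Fin 2)) i x := hx
  change mapV V (SimplexCategory.δ (0 : Fin 2)) j _ = mapV V (SimplexCategory.δ (1 : Fin 2)) j _
  rw [← dV_mapV, ← dV_mapV, h]

/-- The subcomplex `ker(V⁰ ⇉ V¹)` of `V⁰`. -/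
def ker : CochainComplex (ModuleCat.{max u w} k) ℤ where
  X i := ModuleCat.of k (kerSub V i)
  d i j := ModuleCat.ofHom ((dV V 0 i j).restrict (kerSub_d V i j))
  shape i j h := by
    refine ModuleCat.hom_ext (LinearMap.ext fun x => Subtype.ext ?_)
    exact LinearMap.congr_fun
      (congrArg ModuleCat.Hom.hom ((V.obj (SimplexCategory.mk 0)).shape i j h)) x.1
  d_comp_d' i j l _ _ := by
    exact ModuleCat.hom_ext (LinearMap.ext fun x => Subtype.ext (dV_dV V 0 i j l x.1))

/-- Families `a` with components `a n p i ∈ Ωₙᵖ ⊗ V^{n,i}`. -/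
abbrev Family : Type (max u w) :=
  ∀ (n p : ℕ) (i : ℤ), Form k n p ⊗[k] comp V n i

/-- The total differential on `Ωₙ ⊗ Vⁿ` for all `n`: it is `d ⊗ 1 + (-1)ᵖ 1 ⊗ d` on
`Ωₙᵖ ⊗ V^{n,i}`. -/
def totD : Family V →ₗ[k] Family V where
  toFun a n p i := match p with
    | 0 => (dV V n (i - 1) i).lTensor (Form k n 0) (a n 0 (i - 1))
    | p + 1 => (deRham k n p).rTensor (comp V n i) (a n p i) +
        (-1 : k) ^ (p + 1) • (dV V n (i - 1) i).lTensor (Form k n (p + 1)) (a n (p + 1) (i - 1))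
  map_add' a b := by
    funext n p i
    cases p with
    | zero => exact map_add _ _ _
    | succ p => simp only [Pi.add_apply, map_add, smul_add]; abel
  map_smul' c a := by
    funext n p i
    cases p with
    | zero => exact LinearMap.map_smul _ _ _
    | succ p =>
      simp only [Pi.smul_apply, map_smul, smul_add, RingHom.id_apply]
      rw [smul_comm c]

/-- `Tot(V)ᵐ`: the families `a = (aₙ)` with `aₙ ∈ Ωₙ ⊗ Vⁿ` homogeneous of total degree `m`, such
that `(Id ⊗ V(f))(a_p) = (Ω(f) ⊗ Id)(a_q)` for all `f : [p] → [q]` in `Δ`. Because `Ωₙʳ = 0` for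
`r > n`, the element `aₙ` of total degree `m` has only finitely many nonzero components
`a n r i`, `r + i = m`. -/
def totSub (m : ℤ) : Submodule k (Family V) where
  carrier := {a | (∀ (n r : ℕ) (i : ℤ), (r : ℤ) + i ≠ m → a n r i = 0) ∧
    ∀ (p q : ℕ) (f : SimplexCategory.mk p ⟶ SimplexCategory.mk q) (r : ℕ) (i : ℤ),
      (mapV V f i).lTensor (Form k p r) (a p r i) =
        (pull r (fn f)).rTensor (comp V q i) (a q r i)}
  zero_mem' := ⟨fun _ _ _ _ => rfl, fun _ _ _ _ _ => by simp⟩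
  add_mem' {a b} ha hb := ⟨fun n r i h => by simp [ha.1 n r i h, hb.1 n r i h],
    fun p q f r i => by simp [ha.2 p q f r i, hb.2 p q f r i]⟩
  smul_mem' c a ha := ⟨fun n r i h => by simp [ha.1 n r i h],
    fun p q f r i => by simp [ha.2 p q f r i]⟩

lemma totD_zero (a : Family V) (n : ℕ) (i : ℤ) :
    totD V a n 0 i = (dV V n (i - 1) i).lTensor (Form k n 0) (a n 0 (i - 1)) := rfl

lemma totD_succ (a : Family V) (n p : ℕ) (i : ℤ) :
    totD V a n (p + 1) i = (deRham k n p).rTensor (comp V n i) (a n p i) +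
      (-1 : k) ^ (p + 1) •
        (dV V n (i - 1) i).lTensor (Form k n (p + 1)) (a n (p + 1) (i - 1)) := rfl

lemma lTensor_dV_dV (n p : ℕ) (i j l : ℤ) (x : Form k n p ⊗[k] comp V n i) :
    (dV V n j l).lTensor (Form k n p) ((dV V n i j).lTensor (Form k n p) x) = 0 := by
  have h : dV V n j l ∘ₗ dV V n i j = 0 := LinearMap.ext (dV_dV V n i j l)
  rw [← LinearMap.comp_apply, ← LinearMap.lTensor_comp, h, LinearMap.lTensor_zero,
    LinearMap.zero_apply]

lemma rTensor_deRham_deRham (n p : ℕ) (i : ℤ) (x : Form k n p ⊗[k] comp V n i) :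
    (deRham k n (p + 1)).rTensor (comp V n i) ((deRham k n p).rTensor (comp V n i) x) = 0 := by
  rw [← LinearMap.comp_apply, ← LinearMap.rTensor_comp, deRham_comp_deRham,
    LinearMap.rTensor_zero, LinearMap.zero_apply]

lemma lTensor_rTensor {F G : Type u} [AddCommGroup F] [Module k F] [AddCommGroup G] [Module k G]
    {X Y : Type (max u w)} [AddCommGroup X] [Module k X] [AddCommGroup Y] [Module k Y]
    (g : F →ₗ[k] G) (h : X →ₗ[k] Y) (x : F ⊗[k] X) :
    h.lTensor G (g.rTensor X x) = g.rTensor Y (h.lTensor F x) := by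
  rw [← LinearMap.comp_apply, ← LinearMap.comp_apply, LinearMap.lTensor_comp_rTensor,
    LinearMap.rTensor_comp_lTensor]

/-- The total differential squares to zero. -/
lemma totD_totD (a : Family V) : totD V (totD V a) = 0 := by
  funext n p i
  match p with
  | 0 => rw [totD_zero, totD_zero, lTensor_dV_dV]; rfl
  | 1 =>
    rw [totD_succ, totD_succ, totD_zero, map_add, map_smul, lTensor_dV_dV, lTensor_rTensor,
      smul_zero, add_zero]
    simp
  | p + 2 =>
    rw [totD_succ, totD_succ, totD_succ, map_add, map_add, map_smul, map_smul, lTensor_dV_dV,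
      lTensor_rTensor, rTensor_deRham_deRham]
    rw [smul_zero, add_zero, zero_add, ← add_smul, pow_succ _ (p + 1), mul_neg_one, add_neg_cancel,
      zero_smul]
    rfl

lemma totD_mem {m m' : ℤ} (h : m + 1 = m') (a : Family V) (ha : a ∈ totSub V m) :
    totD V a ∈ totSub V m' := by
  refine ⟨fun n r i hr => ?_, fun p q f r i => ?_⟩
  · cases r with
    | zero => rw [totD_zero, ha.1 n 0 (i - 1) (by push_cast at hr ⊢; omega), map_zero]
    | succ r =>
      rw [totD_succ, ha.1 n r i (by push_cast at hr ⊢; omega),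
        ha.1 n (r + 1) (i - 1) (by push_cast at hr ⊢; omega)]
      simp
  · have hV (r : ℕ) (x : Form k p r ⊗[k] comp V p (i - 1)) :
        (mapV V f i).lTensor (Form k p r) ((dV V p (i - 1) i).lTensor (Form k p r) x) =
          (dV V q (i - 1) i).lTensor (Form k p r) ((mapV V f (i - 1)).lTensor (Form k p r) x) := by
      rw [← LinearMap.comp_apply, ← LinearMap.comp_apply, ← LinearMap.lTensor_comp,
        ← LinearMap.lTensor_comp]
      congr 2
      exact LinearMap.ext fun y => (dV_mapV V f (i - 1) i y).symm
    cases r with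
    | zero => rw [totD_zero, totD_zero, hV, ha.2, lTensor_rTensor]
    | succ r =>
      rw [totD_succ, totD_succ, map_add, map_add, map_smul, map_smul, hV, ha.2, lTensor_rTensor,
        lTensor_rTensor, ha.2, ← LinearMap.comp_apply, ← LinearMap.rTensor_comp, ← pull_deRham,
        LinearMap.rTensor_comp, LinearMap.comp_apply]

/-- The complex `Tot(V)`. -/
def Tot : CochainComplex (ModuleCat.{max u w} k) ℤ where
  X m := ModuleCat.of k (totSub V m)
  d m m' := if h : m + 1 = m' then ModuleCat.ofHom ((totD V).restrict (totD_mem V h)) else 0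
  shape m m' h := dif_neg h
  d_comp_d' m m' m'' h h' := by
    rw [dif_pos (show m + 1 = m' from h), dif_pos (show m' + 1 = m'' from h')]
    exact ModuleCat.hom_ext (LinearMap.ext fun x => Subtype.ext (totD_totD V x.1))

/-- The morphism `[0] → [n]` with value `0`. -/
def vertex (n : ℕ) : SimplexCategory.mk 0 ⟶ SimplexCategory.mk n :=
  SimplexCategory.const _ _ 0

/-- The family attached to `a ∈ V^{0,m}`: its `n`-th member is `1 ⊗ V(vertex n)(a) ∈ Ωₙ⁰ ⊗ V^{n,m}`.
For `a` in `ker(V⁰ ⇉ V¹)` the image of `a` in `Vⁿ` does not depend on the chosen vertex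
`[0] → [n]`. -/
def unitFamily (m : ℤ) : comp V 0 m →ₗ[k] Family V where
  toFun x n p i := match p with
    | 0 => Pi.single (M := fun i => Form k n 0 ⊗[k] comp V n i) m
        (unit k n ⊗ₜ mapV V (vertex n) m x) i
    | _ + 1 => 0
  map_add' x y := by
    funext n p i
    cases p with
    | zero => simp only [map_add, TensorProduct.tmul_add, Pi.single_add, Pi.add_apply]
    | succ p => exact (add_zero _).symm
  map_smul' c x := by
    funext n p i
    cases p with
    | zero =>
      simp only [map_smul, TensorProduct.tmul_smul, Pi.single_smul, Pi.smul_apply,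
        RingHom.id_apply]
    | succ p => exact (smul_zero c).symm

lemma unitFamily_self (m : ℤ) (x : comp V 0 m) (n : ℕ) :
    unitFamily V m x n 0 m = unit k n ⊗ₜ mapV V (vertex n) m x :=
  Pi.single_eq_same (M := fun i => Form k n 0 ⊗[k] comp V n i) m _

lemma unitFamily_of_ne {m i : ℤ} (h : i ≠ m) (x : comp V 0 m) (n : ℕ) :
    unitFamily V m x n 0 i = 0 :=
  Pi.single_eq_of_ne (M := fun i => Form k n 0 ⊗[k] comp V n i) h _

lemma unitFamily_succ (m i : ℤ) (x : comp V 0 m) (n p : ℕ) :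
    unitFamily V m x n (p + 1) i = 0 := rfl

/-- The image of `x ∈ ker(V⁰ ⇉ V¹)` in `Vⁿ` does not depend on the chosen vertex `[0] → [n]`. -/
lemma mapV_vertex_eq {m : ℤ} {x : comp V 0 m} (hx : x ∈ kerSub V m) {n : ℕ}
    (f : SimplexCategory.mk 0 ⟶ SimplexCategory.mk n) :
    mapV V f m x = mapV V (vertex n) m x := by
  let g : SimplexCategory.mk 1 ⟶ SimplexCategory.mk n :=
    SimplexCategory.mkOfLe 0 (f.toOrderHom 0) (Fin.zero_le _)
  have h0 : SimplexCategory.δ (0 : Fin 2) ≫ g = f := by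
    ext j
    fin_cases j
    rfl
  have h1 : SimplexCategory.δ (1 : Fin 2) ≫ g = vertex n := by
    ext j
    fin_cases j
    rfl
  have hx' : mapV V (SimplexCategory.δ (0 : Fin 2)) m x =
    mapV V (SimplexCategory.δ (1 : Fin 2)) m x := hx
  rw [← h0, ← h1, mapV_comp, mapV_comp, hx']

lemma unitFamily_mem (m : ℤ) (x : comp V 0 m) (hx : x ∈ kerSub V m) :
    unitFamily V m x ∈ totSub V m := by
  refine ⟨fun n r i hr => ?_, fun p q f r i => ?_⟩
  · cases r with
    | zero => exact unitFamily_of_ne V (by simpa using hr) x n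
    | succ r => rfl
  · cases r with
    | zero =>
      rcases eq_or_ne i m with rfl | h
      · rw [unitFamily_self, unitFamily_self, LinearMap.lTensor_tmul, LinearMap.rTensor_tmul,
          pull_unit, ← mapV_vertex_eq V hx (vertex p ≫ f), mapV_comp]
      · rw [unitFamily_of_ne V h, unitFamily_of_ne V h, map_zero, map_zero]
    | succ r => rw [unitFamily_succ, unitFamily_succ, map_zero, map_zero]

lemma totD_unitFamily {m m' : ℤ} (h : m + 1 = m') (x : comp V 0 m) :
    totD V (unitFamily V m x) = unitFamily V m' (dV V 0 m m' x) := by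
  obtain rfl : m = m' - 1 := by omega
  funext n p i
  match p with
  | 0 =>
    rw [totD_zero]
    rcases eq_or_ne i m' with rfl | hi
    · rw [unitFamily_self, unitFamily_self, LinearMap.lTensor_tmul, dV_mapV]
    · rw [unitFamily_of_ne V (by omega), unitFamily_of_ne V hi, map_zero]
  | 1 =>
    rw [totD_succ, unitFamily_succ, unitFamily_succ, map_zero, smul_zero, add_zero]
    rcases eq_or_ne i (m' - 1) with rfl | hi
    · rw [unitFamily_self, LinearMap.rTensor_tmul, deRham_unit, TensorProduct.zero_tmul]
    · rw [unitFamily_of_ne V hi, map_zero]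
  | p + 2 =>
    rw [totD_succ, unitFamily_succ, unitFamily_succ, unitFamily_succ]
    simp

/-- The canonical map of complexes `ker(V⁰ ⇉ V¹) → Tot(V)`, `a ↦ 1 ⊗ a`. -/
def kerToTot : ker V ⟶ Tot V where
  f m := ModuleCat.ofHom ((unitFamily V m).restrict (unitFamily_mem V m))
  comm' m m' h := by
    have hd : (Tot V).d m m' = ModuleCat.ofHom ((totD V).restrict (totD_mem V h)) := dif_pos h
    rw [hd]
    exact ModuleCat.hom_ext (LinearMap.ext fun x => Subtype.ext (totD_unitFamily V h x.1))

end CosimplicialTot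

end

noncomputable section

namespace PolyDeRham

section Contraction

variable {k : Type u} [Field k] {M N : Type u} [AddCommGroup M] [Module k M]
  [AddCommGroup N] [Module k N]

lemma contractLeft_mem (θ : Module.Dual k M) (p : ℕ) (x : ExteriorAlgebra k M)
    (hx : x ∈ ⋀[k]^(p + 1) M) : CliffordAlgebra.contractLeft θ x ∈ ⋀[k]^p M := by
  induction p generalizing x with
  | zero =>
    change x ∈ LinearMap.range (ExteriorAlgebra.ι k) ^ (0 + 1) at hx
    change _ ∈ LinearMap.range (ExteriorAlgebra.ι k) ^ 0
    rw [zero_add, pow_one] at hx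
    obtain ⟨v, rfl⟩ := hx
    rw [ExteriorAlgebra.ι, CliffordAlgebra.contractLeft_ι, pow_zero]
    exact Submodule.algebraMap_mem _
  | succ p ih =>
    change x ∈ LinearMap.range (ExteriorAlgebra.ι k) ^ (p + 1 + 1) at hx
    rw [pow_succ'] at hx
    induction hx using Submodule.mul_induction_on' with
    | mem_mul_mem a ha b hb =>
      obtain ⟨v, rfl⟩ := ha
      rw [ExteriorAlgebra.ι, CliffordAlgebra.contractLeft_ι_mul]
      refine Submodule.sub_mem _ (Submodule.smul_mem _ _ hb) ?_
      change _ ∈ LinearMap.range (ExteriorAlgebra.ι k) ^ (p + 1)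
      rw [pow_succ']
      exact Submodule.mul_mem_mul ⟨v, rfl⟩ (ih b hb)
    | add a _ b _ ha hb => rw [map_add]; exact Submodule.add_mem _ ha hb

/-- Contraction of exterior powers with a linear form. -/
def contr (θ : Module.Dual k M) (p : ℕ) : ⋀[k]^(p + 1) M →ₗ[k] ⋀[k]^p M :=
  (CliffordAlgebra.contractLeft θ).restrict (contractLeft_mem θ p)

lemma contr_coe (θ : Module.Dual k M) (p : ℕ) (x : ⋀[k]^(p + 1) M) :
    (contr θ p x : ExteriorAlgebra k M) =
      CliffordAlgebra.contractLeft θ (x : ExteriorAlgebra k M) := rfl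

lemma contr_wedge (θ : Module.Dual k M) (p : ℕ) (v : M) (x : ⋀[k]^(p + 1) M) :
    contr θ (p + 1) (wedge (p + 1) v x) = θ v • x - wedge p v (contr θ p x) := by
  apply Subtype.ext
  rw [contr_coe, wedge_coe, ExteriorAlgebra.ι, CliffordAlgebra.contractLeft_ι_mul]
  rfl

lemma contr_wedge_zero (θ : Module.Dual k M) (v : M) (x : ⋀[k]^0 M) :
    contr θ 0 (wedge 0 v x) = θ v • x := by
  apply Subtype.ext
  rw [contr_coe, wedge_coe, ExteriorAlgebra.ι, CliffordAlgebra.contractLeft_ι_mul]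
  have hx : (x : ExteriorAlgebra k M) ∈ LinearMap.range (ExteriorAlgebra.ι k (M := M)) ^ 0 := x.2
  rw [pow_zero] at hx
  obtain ⟨c, hc⟩ := Submodule.mem_one.mp hx
  rw [← hc, CliffordAlgebra.contractLeft_algebraMap, mul_zero, sub_zero, hc]
  rfl

lemma wedge_hom_ext {p : ℕ} {P : Type*} [AddCommGroup P] [Module k P]
    {g h : ⋀[k]^(p + 1) M →ₗ[k] P} (H : ∀ v x, g (wedge p v x) = h (wedge p v x)) : g = h := by
  apply exteriorPower.linearMap_ext
  ext v
  have : exteriorPower.ιMulti k (p + 1) v =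
      wedge p (v 0) (exteriorPower.ιMulti k p (fun i => v i.succ)) := by
    apply Subtype.ext
    rw [wedge_coe, exteriorPower.ιMulti_apply_coe, exteriorPower.ιMulti_apply_coe,
      ExteriorAlgebra.ιMulti_succ_apply]
    rfl
  simp only [LinearMap.compAlternatingMap_apply, this, H]

lemma contr_map (g : M →ₗ[k] N) (θ : Module.Dual k N) (p : ℕ) :
    contr θ p ∘ₗ exteriorPower.map (p + 1) g = exteriorPower.map p g ∘ₗ contr (θ ∘ₗ g) p := by
  induction p with
  | zero =>
    apply wedge_hom_ext
    intro v x
    simp only [LinearMap.comp_apply, map_wedge, contr_wedge_zero, map_smul]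
  | succ p ih =>
    apply wedge_hom_ext
    intro v x
    have := LinearMap.congr_fun ih x
    simp only [LinearMap.comp_apply] at this
    simp only [LinearMap.comp_apply, map_wedge, contr_wedge, map_smul, map_sub, this]

end Contraction

section Euler

variable {k : Type u} [Field k] {n : ℕ}

lemma cov_eq_sum (c : Fin (n + 1) → k) : (cov c : Cov k n) = ∑ i, c i • dt i := by
  conv_lhs => rw [← Finset.univ_sum_single c]
  rw [map_sum]
  refine Finset.sum_congr rfl fun i _ => ?_
  rw [dt, ← map_smul]
  congr 1
  ext l
  simp [Pi.single_apply]

lemma cov_surjective : Function.Surjective (cov : (Fin (n + 1) → k) →ₗ[k] Cov k n) :=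
  Submodule.mkQ_surjective _

/-- The linear form `dtᵢ ↦ δ_{il} - δ_{ij}`: pairing with the vector from vertex `j` to vertex
`l`. -/
def edge (l j : Fin (n + 1)) : Module.Dual k (Cov k n) :=
  Submodule.liftQ _ (LinearMap.proj (R := k) (φ := fun _ : Fin (n + 1) => k) l - LinearMap.proj j)
    (by
      rw [Submodule.span_le, Set.singleton_subset_iff]
      exact LinearMap.mem_ker.mpr (sub_self (1 : k)))

lemma edge_cov (l j : Fin (n + 1)) (c : Fin (n + 1) → k) : edge l j (cov c) = c l - c j := rfl

lemma edge_dt (l j i : Fin (n + 1)) : edge l j (dt i : Cov k n) =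
    (if l = i then 1 else 0) - (if j = i then 1 else 0) := by
  rw [dt, edge_cov, Pi.single_apply, Pi.single_apply]

lemma edge_pullCov {p q : ℕ} (f : Fin (p + 1) → Fin (q + 1)) (l j : Fin (p + 1)) :
    (edge l j : Module.Dual k (Cov k p)) ∘ₗ pullCov f = edge (f l) (f j) := by
  ext v
  obtain ⟨c, rfl⟩ := cov_surjective v
  change edge l j (cov (LinearMap.funLeft k k f c)) = _
  rw [edge_cov, edge_cov]
  rfl

lemma sum_edge_smul_dt (j : Fin (n + 1)) (v : Cov k n) : ∑ l, edge l j v • dt l = v := by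
  obtain ⟨c, rfl⟩ := cov_surjective v
  simp only [edge_cov, sub_smul, Finset.sum_sub_distrib]
  rw [← Finset.smul_sum, sum_dt, smul_zero, sub_zero, ← cov_eq_sum]

lemma sum_wedge_dt_contr_edge (j : Fin (n + 1)) (p : ℕ) (x : ⋀[k]^(p + 1) (Cov k n)) :
    ∑ l, wedge p (dt l) (contr (edge l j) p x) = (p + 1 : k) • x := by
  have key : ∀ p : ℕ, ∑ l, wedge p (dt l : Cov k n) ∘ₗ contr (edge l j) p =
      (p + 1 : k) • LinearMap.id := by
    have hsum (p : ℕ) (v : Cov k n) (x : ⋀[k]^p (Cov k n)) :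
        ∑ l, edge l j v • wedge p (dt l) x = wedge p v x := by
      conv_rhs => rw [← sum_edge_smul_dt j v]
      change _ = wedgeₗ _ p _ x
      rw [map_sum, LinearMap.sum_apply]
      simp only [map_smul, LinearMap.smul_apply]
      rfl
    intro p
    induction p with
    | zero =>
      apply wedge_hom_ext
      intro v x
      simp only [LinearMap.sum_apply, LinearMap.comp_apply, contr_wedge_zero, map_smul, hsum]
      simp
    | succ p ih =>
      apply wedge_hom_ext
      intro v x
      have hx := LinearMap.congr_fun ih x
      simp only [LinearMap.sum_apply, LinearMap.comp_apply, LinearMap.smul_apply,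
        LinearMap.id_apply] at hx
      simp only [LinearMap.sum_apply, LinearMap.comp_apply, contr_wedge, map_smul, map_sub,
        Finset.sum_sub_distrib, hsum]
      have h2 : ∑ l, wedge (p + 1) (dt l) (wedge p v (contr (edge l j) p x)) =
          -((p + 1 : k) • wedge (p + 1) v x) := by
        rw [← map_smul, ← hx, map_sum, ← Finset.sum_neg_distrib]
        exact Finset.sum_congr rfl fun l _ => eq_neg_of_add_eq_zero_left (wedge_wedge_add _ _ _ _)
      rw [h2]
      change _ = ((p + 1 : ℕ) + 1 : k) • wedge (p + 1) v x
      rw [Nat.cast_add, Nat.cast_one, sub_neg_eq_add]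
      module
  have := LinearMap.congr_fun (key p) x
  simpa only [LinearMap.sum_apply, LinearMap.comp_apply, LinearMap.smul_apply,
        LinearMap.id_apply] using this

end Euler

end PolyDeRham

end

noncomputable section

namespace PolyDeRham

section Integral

open Polynomial

variable {k : Type u} [Field k] {R : Type u} [CommRing R] [Algebra k R]

variable (k) in
/-- The integral `∫₀¹ g(s) ds` of a polynomial `g` in `s`. -/
def integral : R[X] →ₗ[k] R := Polynomial.lsum fun m => ((m + 1 : ℕ) : k)⁻¹ • LinearMap.id

lemma integral_monomial (m : ℕ) (a : R) :
    integral k (monomial m a) = ((m + 1 : ℕ) : k)⁻¹ • a := by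
  simp [integral, Polynomial.lsum, sum_monomial_index]

lemma integral_C_mul (a : R) (g : R[X]) : integral k (C a * g) = a * integral k g := by
  induction g using Polynomial.induction_on' with
  | add p q hp hq => rw [mul_add, map_add, map_add, hp, hq, mul_add]
  | monomial m b => rw [C_mul_monomial, integral_monomial, integral_monomial, mul_smul_comm]

lemma integral_derivative [CharZero k] (g : R[X]) :
    integral k (derivative g) = g.eval 1 - g.eval 0 := by
  induction g using Polynomial.induction_on' with
  | add p q hp hq => rw [derivative_add, map_add, hp, hq, eval_add, eval_add]; abel
  | monomial m b =>
    cases m with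
    | zero => simp
    | succ m =>
      rw [derivative_monomial, integral_monomial, Nat.add_sub_cancel, eval_monomial, eval_monomial,
        one_pow, mul_one, zero_pow (Nat.succ_ne_zero m), mul_zero, sub_zero, mul_comm b,
        ← nsmul_eq_mul, ← Nat.cast_smul_eq_nsmul k, smul_smul,
        inv_mul_cancel₀ (Nat.cast_ne_zero.mpr (Nat.succ_ne_zero m)), one_smul]

lemma integral_map {S : Type u} [CommRing S] [Algebra k S] (φ : R →ₐ[k] S) (g : R[X]) :
    φ (integral k g) = integral k (g.map φ.toRingHom) := by
  induction g using Polynomial.induction_on' with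
  | add p q hp hq => rw [map_add, map_add, hp, hq, Polynomial.map_add, map_add]
  | monomial m b => rw [map_monomial, integral_monomial, integral_monomial, map_smul]; rfl

/-- A derivation applied to the coefficients of a polynomial. -/
def coeffDeriv (D : Derivation k R R) : R[X] →ₗ[k] R[X] :=
  Polynomial.lsum fun m => (monomial m).restrictScalars k ∘ₗ D.toLinearMap

lemma coeffDeriv_monomial (D : Derivation k R R) (m : ℕ) (a : R) :
    coeffDeriv D (monomial m a) = monomial m (D a) := by
  simp [coeffDeriv, Polynomial.lsum, sum_monomial_index]

lemma coeffDeriv_mul (D : Derivation k R R) (f g : R[X]) :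
    coeffDeriv D (f * g) = f * coeffDeriv D g + coeffDeriv D f * g := by
  induction f using Polynomial.induction_on' with
  | add p q hp hq => rw [add_mul, map_add, map_add, hp, hq]; ring
  | monomial m a =>
    induction g using Polynomial.induction_on' with
    | add p q hp hq => rw [mul_add, map_add, map_add, hp, hq]; ring
    | monomial l b =>
      simp only [coeffDeriv_monomial, monomial_mul_monomial, Derivation.leibniz, smul_eq_mul,
        map_add]
      rw [mul_comm b]

lemma coeffDeriv_X_pow (D : Derivation k R R) (m : ℕ) : coeffDeriv D (X ^ m : R[X]) = 0 := by
  rw [X_pow_eq_monomial, coeffDeriv_monomial]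
  simp

lemma integral_coeffDeriv (D : Derivation k R R) (g : R[X]) :
    D (integral k g) = integral k (coeffDeriv D g) := by
  induction g using Polynomial.induction_on' with
  | add p q hp hq => rw [map_add, map_add, hp, hq, map_add, map_add]
  | monomial m b =>
    rw [coeffDeriv_monomial, integral_monomial, integral_monomial, Derivation.map_smul]

end Integral

section Cone

variable {k : Type u} [Field k] {n : ℕ}

/-- The substitution `tᵢ ↦ s tᵢ + (1 - s) δᵢⱼ` contracting the simplex to its vertex `j`. -/
def cone (j : Fin (n + 1)) :
    MvPolynomial (Fin (n + 1)) k →ₐ[k] Polynomial (MvPolynomial (Fin (n + 1)) k) :=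
  MvPolynomial.aeval fun i => Polynomial.X * Polynomial.C (MvPolynomial.X i) +
    (1 - Polynomial.X) * Polynomial.C (if j = i then 1 else 0)

lemma cone_X (j i : Fin (n + 1)) : cone (k := k) j (MvPolynomial.X i) =
    Polynomial.X * Polynomial.C (MvPolynomial.X i) +
    (1 - Polynomial.X) * Polynomial.C (if j = i then 1 else 0) := by
  simp [cone]

lemma cone_C (j : Fin (n + 1)) (a : k) : cone (k := k) j (MvPolynomial.C a) =
    Polynomial.C (MvPolynomial.C a) := by
  simp [cone, MvPolynomial.algebraMap_eq]

lemma cone_rel (j : Fin (n + 1)) :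
    cone (k := k) j (∑ i, MvPolynomial.X i - 1) =
      Polynomial.C (∑ i, MvPolynomial.X i - 1) * Polynomial.X := by
  simp only [map_sub, map_sum, map_one, cone_X, Finset.sum_add_distrib, ← Finset.mul_sum]
  have : ∑ i, Polynomial.C (if j = i then 1 else 0 : MvPolynomial (Fin (n + 1)) k) = 1 := by
    rw [← map_sum, Finset.sum_ite_eq]; simp
  rw [this]
  ring

lemma eval_one_cone (j : Fin (n + 1)) (f : MvPolynomial (Fin (n + 1)) k) :
    (cone j f).eval 1 = f := by
  induction f using MvPolynomial.induction_on with
  | C a => rw [cone_C, Polynomial.eval_C]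
  | add a b ha hb => rw [map_add, Polynomial.eval_add, ha, hb]
  | mul_X a i ha => rw [map_mul, Polynomial.eval_mul, ha, cone_X]; split_ifs <;> simp

lemma eval_zero_cone (j : Fin (n + 1)) (f : MvPolynomial (Fin (n + 1)) k) :
    (cone j f).eval 0 = MvPolynomial.C (MvPolynomial.eval (Pi.single j 1) f) := by
  induction f using MvPolynomial.induction_on with
  | C a => rw [cone_C, Polynomial.eval_C, MvPolynomial.eval_C]
  | add a b ha hb => rw [map_add, Polynomial.eval_add, ha, hb, map_add, map_add]
  | mul_X a i ha =>
    rw [map_mul, Polynomial.eval_mul, ha, cone_X, map_mul, map_mul, MvPolynomial.eval_X,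
      Pi.single_apply]
    rcases eq_or_ne j i with rfl | h
    · simp
    · simp [h, h.symm]

lemma derivative_cone (j : Fin (n + 1)) (f : MvPolynomial (Fin (n + 1)) k) :
    Polynomial.derivative (cone j f) = ∑ i, Polynomial.C (MvPolynomial.X i - if j = i then 1 else 0)
      * cone j (MvPolynomial.pderiv i f) := by
  induction f using MvPolynomial.induction_on with
  | C a => simp
  | add a b ha hb =>
    simp only [map_add, ha, hb, mul_add, Finset.sum_add_distrib]
  | mul_X a l ha =>
    have hl : Polynomial.derivative (cone j (MvPolynomial.X l : MvPolynomial _ k)) =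
        Polynomial.C (MvPolynomial.X l - if j = l then 1 else 0) := by
      rw [cone_X]
      simp only [Polynomial.derivative_add, Polynomial.derivative_mul, Polynomial.derivative_C,
        Polynomial.derivative_X, Polynomial.derivative_one, map_sub]
      ring
    rw [map_mul, Polynomial.derivative_mul, ha, hl]
    simp only [MvPolynomial.pderiv_mul, map_add, map_mul, mul_add, Finset.sum_add_distrib,
      MvPolynomial.pderiv_X]
    congr 1
    · rw [Finset.sum_mul]
      exact Finset.sum_congr rfl fun i _ => by ring
    · rw [Finset.sum_eq_single l]
      · simp; ring
      · intro i _ hi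
        simp [Ne.symm hi]
      · simp

lemma coeffDeriv_cone (j i : Fin (n + 1)) (f : MvPolynomial (Fin (n + 1)) k) :
    coeffDeriv (MvPolynomial.pderiv i) (cone j f) =
      Polynomial.X * cone j (MvPolynomial.pderiv i f) := by
  induction f using MvPolynomial.induction_on with
  | C a => simp [← Polynomial.monomial_zero_left, coeffDeriv_monomial]
  | add a b ha hb => simp only [map_add, ha, hb, mul_add]
  | mul_X a l ha =>
    have h0 (c : MvPolynomial (Fin (n + 1)) k) : coeffDeriv (MvPolynomial.pderiv i)
        (Polynomial.C c) = Polynomial.C (MvPolynomial.pderiv i c) := by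
      rw [← Polynomial.monomial_zero_left, coeffDeriv_monomial, Polynomial.monomial_zero_left]
    have hX : coeffDeriv (MvPolynomial.pderiv i)
        (Polynomial.X : Polynomial (MvPolynomial (Fin (n + 1)) k)) = 0 := by
      simpa using coeffDeriv_X_pow (MvPolynomial.pderiv (R := k) i) 1
    have h1 : coeffDeriv (MvPolynomial.pderiv i)
        (1 : Polynomial (MvPolynomial (Fin (n + 1)) k)) = 0 := by
      simpa using coeffDeriv_X_pow (MvPolynomial.pderiv (R := k) i) 0
    have hl : coeffDeriv (MvPolynomial.pderiv i) (cone j (MvPolynomial.X l : MvPolynomial _ k)) =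
        Polynomial.X * cone j (MvPolynomial.pderiv i (MvPolynomial.X l)) := by
      rw [cone_X]
      simp only [map_add, coeffDeriv_mul, h0, hX, map_sub, h1, MvPolynomial.pderiv_X,
        Pi.single_apply]
      split_ifs <;> simp
    rw [map_mul, coeffDeriv_mul, ha, hl, MvPolynomial.pderiv_mul, map_add, map_mul, map_mul]
    ring

/-- The operator `f ↦ ∫₀¹ sᵖ f(s t + (1 - s) eⱼ) ds` on polynomials. -/
def conePoly (j : Fin (n + 1)) (p : ℕ) :
    MvPolynomial (Fin (n + 1)) k →ₗ[k] MvPolynomial (Fin (n + 1)) k :=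
  integral k ∘ₗ LinearMap.mulLeft k (Polynomial.X ^ p) ∘ₗ (cone j).toLinearMap

lemma conePoly_apply (j : Fin (n + 1)) (p : ℕ) (f : MvPolynomial (Fin (n + 1)) k) :
    conePoly j p f = integral k (Polynomial.X ^ p * cone j f) := rfl

lemma pderiv_conePoly (j i : Fin (n + 1)) (p : ℕ) (f : MvPolynomial (Fin (n + 1)) k) :
    MvPolynomial.pderiv i (conePoly j p f) = conePoly j (p + 1) (MvPolynomial.pderiv i f) := by
  rw [conePoly_apply, integral_coeffDeriv, coeffDeriv_mul, coeffDeriv_X_pow, coeffDeriv_cone,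
    conePoly_apply]
  congr 1
  ring

lemma sum_conePoly [CharZero k] (j : Fin (n + 1)) (p : ℕ) (f : MvPolynomial (Fin (n + 1)) k) :
    ∑ i, (MvPolynomial.X i - if j = i then 1 else 0) *
      conePoly j (p + 1) (MvPolynomial.pderiv i f) + (p + 1 : k) • conePoly j p f = f := by
  have h := integral_derivative (k := k) (Polynomial.X ^ (p + 1) * cone j f)
  rw [Polynomial.derivative_mul, derivative_cone, map_add] at h
  simp only [Polynomial.eval_mul, Polynomial.eval_pow, Polynomial.eval_X, one_pow, one_mul,
    zero_pow (Nat.succ_ne_zero p), zero_mul, sub_zero, eval_one_cone] at h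
  rw [Finset.mul_sum, map_sum] at h
  refine Eq.trans ?_ h
  rw [add_comm (∑ i, _)]
  congr 1
  · rw [conePoly_apply, ← map_smul, Polynomial.derivative_X_pow]
    congr 1
    rw [Nat.add_sub_cancel, mul_assoc, Algebra.smul_def]
    congr 1
    simp
  · refine Finset.sum_congr rfl fun i _ => ?_
    rw [conePoly_apply, ← integral_C_mul]
    exact congrArg (integral k) (mul_left_comm _ _ _)

lemma sum_conePoly_zero [CharZero k] (j : Fin (n + 1)) (f : MvPolynomial (Fin (n + 1)) k) :
    ∑ i, (MvPolynomial.X i - if j = i then 1 else 0) *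
      conePoly j 0 (MvPolynomial.pderiv i f) =
        f - MvPolynomial.C (MvPolynomial.eval (Pi.single j 1) f) := by
  have h := integral_derivative (k := k) (cone j f)
  rw [derivative_cone, eval_one_cone, eval_zero_cone, map_sum] at h
  rw [← h]
  refine Finset.sum_congr rfl fun i _ => ?_
  rw [conePoly_apply, ← integral_C_mul, pow_zero, one_mul]

lemma conePoly_mem (j : Fin (n + 1)) (p : ℕ) (f : MvPolynomial (Fin (n + 1)) k)
    (hf : f ∈ relIdeal k n) : conePoly j p f ∈ relIdeal k n := by
  obtain ⟨g, rfl⟩ := Ideal.mem_span_singleton'.mp hf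
  have : conePoly j p (g * (∑ i, MvPolynomial.X i - 1)) =
      (∑ i, MvPolynomial.X i - 1) * conePoly j (p + 1) g := by
    rw [conePoly_apply, conePoly_apply, map_mul (cone j), cone_rel, ← integral_C_mul, pow_succ]
    exact congrArg (integral k) (by ac_rfl)
  rw [this]
  exact Ideal.mul_mem_right _ _ (Ideal.subset_span rfl)

lemma pullPoly_X {p q : ℕ} (f : Fin (p + 1) → Fin (q + 1)) (l : Fin (q + 1)) :
    pullPoly f (MvPolynomial.X l : MvPolynomial _ k) = ∑ i with f i = l, MvPolynomial.X i := by
  simp [pullPoly]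

lemma pullPoly_conePoly {p q : ℕ} (f : Fin (p + 1) → Fin (q + 1)) (j : Fin (p + 1)) (r : ℕ)
    (g : MvPolynomial (Fin (q + 1)) k) :
    pullPoly f (conePoly (f j) r g) = conePoly j r (pullPoly f g) := by
  have h : (cone (f j) g).map (pullPoly f).toRingHom = cone j (pullPoly f g) := by
    induction g using MvPolynomial.induction_on with
    | C a => simp [pullPoly, MvPolynomial.algebraMap_eq]
    | add a b ha hb => simp only [map_add, Polynomial.map_add, ha, hb]
    | mul_X a l ha =>
      rw [map_mul, Polynomial.map_mul, ha, map_mul, map_mul]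
      congr 1
      rw [pullPoly_X, map_sum]
      simp only [cone_X, Finset.sum_add_distrib, ← Finset.mul_sum]
      rw [← map_sum, ← map_sum, Finset.sum_ite_eq]
      rcases eq_or_ne (f j) l with h | h
      · simp [pullPoly_X, h, -Polynomial.X_mul_C]
      · simp [pullPoly_X, h, -Polynomial.X_mul_C]
  rw [conePoly_apply, integral_map, Polynomial.map_mul, h, Polynomial.map_pow, Polynomial.map_X,
    conePoly_apply]

/-- The operator `conePoly` on polynomial functions on the simplex. -/
def coneFun (j : Fin (n + 1)) (p : ℕ) : Fun k n →ₗ[k] Fun k n :=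
  Submodule.mapQ ((relIdeal k n).restrictScalars k) ((relIdeal k n).restrictScalars k)
    (conePoly j p) (conePoly_mem j p)

lemma coneFun_poly (j : Fin (n + 1)) (p : ℕ) (f : MvPolynomial (Fin (n + 1)) k) :
    coneFun j p (poly f) = poly (conePoly j p f) := rfl

/-- Multiplication of forms by a function. -/
def mulForm {p : ℕ} (g : Fun k n) : Form k n p →ₗ[k] Form k n p :=
  Form.toTensor.symm.toLinearMap ∘ₗ
    (LinearMap.mulLeft k g).rTensor _ ∘ₗ Form.toTensor.toLinearMap

lemma mulForm_mk {p : ℕ} (g f : Fun k n) (x : ⋀[k]^p (Cov k n)) :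
    mulForm g (Form.mk f x) = Form.mk (g * f) x := rfl

/-- The homotopy operator contracting forms on the simplex to the vertex `j`. -/
def coneForm (j : Fin (n + 1)) (p : ℕ) : Form k n (p + 1) →ₗ[k] Form k n p :=
  ∑ l, mulForm (poly (MvPolynomial.X l)) ∘ₗ Form.toTensor.symm.toLinearMap ∘ₗ
    TensorProduct.map (coneFun j p) (contr (edge l j) p) ∘ₗ Form.toTensor.toLinearMap

lemma coneForm_mk (j : Fin (n + 1)) (p : ℕ) (f : MvPolynomial (Fin (n + 1)) k)
    (x : ⋀[k]^(p + 1) (Cov k n)) : coneForm j p (Form.mk (poly f) x) =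
      ∑ l, Form.mk (poly (MvPolynomial.X l * conePoly j p f)) (contr (edge l j) p x) := by
  rw [coneForm, LinearMap.sum_apply]
  refine Finset.sum_congr rfl fun l _ => ?_
  rw [map_mul, ← coneFun_poly]
  rfl

lemma poly_sum_X : poly (∑ i, MvPolynomial.X i : MvPolynomial (Fin (n + 1)) k) = 1 := by
  have h0 : poly (∑ i, MvPolynomial.X i - 1 : MvPolynomial (Fin (n + 1)) k) = 0 :=
    Ideal.Quotient.eq_zero_iff_mem.mpr (Ideal.subset_span rfl)
  rwa [map_sub, map_one, sub_eq_zero] at h0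

lemma poly_sum_edge_dt (j i : Fin (n + 1)) (g : MvPolynomial (Fin (n + 1)) k) :
    poly (∑ l, edge l j (dt i : Cov k n) • (MvPolynomial.X l * g)) =
      poly ((MvPolynomial.X i - if j = i then 1 else 0) * g) := by
  have h : ∑ l, edge l j (dt i : Cov k n) • (MvPolynomial.X l * g) =
      (MvPolynomial.X i - (if j = i then 1 else 0) * ∑ l, MvPolynomial.X l) * g := by
    simp only [edge_dt, sub_smul, Finset.sum_sub_distrib, ite_smul, one_smul, zero_smul,
      Finset.sum_ite_eq', Finset.mem_univ, if_true, sub_mul, Finset.mul_sum, Finset.sum_mul]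
    split_ifs <;> simp
  rw [h, map_mul, map_mul, map_sub, map_sub, map_mul, poly_sum_X, mul_one]

lemma sum_mk_contr_wedge (j : Fin (n + 1)) (p : ℕ) (F : Fin (n + 1) → MvPolynomial (Fin (n + 1)) k)
    (y : ⋀[k]^p (Cov k n)) :
    ∑ i, ∑ l, Form.mk (poly (MvPolynomial.X l * F i)) (edge l j (dt i : Cov k n) • y) =
      Form.mk (poly (∑ i, (MvPolynomial.X i - if j = i then 1 else 0) * F i)) y := by
  rw [map_sum, map_sum, LinearMap.sum_apply]
  refine Finset.sum_congr rfl fun i _ => ?_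
  rw [← poly_sum_edge_dt, map_sum, map_sum, LinearMap.sum_apply]
  refine Finset.sum_congr rfl fun l _ => ?_
  rw [map_smul, map_smul, map_smul, LinearMap.smul_apply]

lemma deRham_coneForm_add [CharZero k] (j : Fin (n + 1)) (p : ℕ) :
    deRham k n p ∘ₗ coneForm j p + coneForm j (p + 1) ∘ₗ deRham k n (p + 1) = LinearMap.id := by
  apply form_ext
  intro f x
  simp only [LinearMap.add_apply, LinearMap.comp_apply, LinearMap.id_apply, coneForm_mk, deRham_mk,
    map_sum, contr_wedge, map_sub, Finset.sum_sub_distrib, sum_mk_contr_wedge]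
  have h1 (l i : Fin (n + 1)) (y : ⋀[k]^(p + 1) (Cov k n)) :
      Form.mk (poly (MvPolynomial.pderiv i (MvPolynomial.X l * conePoly j p f))) y =
      Form.mk (poly (MvPolynomial.X l * conePoly j (p + 1) (MvPolynomial.pderiv i f))) y +
      if i = l then Form.mk (poly (conePoly j p f)) y else 0 := by
    rw [MvPolynomial.pderiv_mul, pderiv_conePoly, map_add, map_add, LinearMap.add_apply,
      add_comm (Form.mk (poly (_ * conePoly j p f)) y), MvPolynomial.pderiv_X, Pi.single_apply]
    congr 1
    split_ifs with h h' h' <;> simp_all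
  simp only [h1, Finset.sum_add_distrib, Finset.sum_ite_eq', Finset.mem_univ, if_true,
    ← map_sum (Form.mk _), sum_wedge_dt_contr_edge]
  rw [Finset.sum_comm]
  conv_rhs => rw [← sum_conePoly j p f, map_add, map_add, LinearMap.add_apply, map_smul, map_smul,
    LinearMap.smul_apply, ← map_smul]
  simp only [map_sum, LinearMap.sum_apply]
  abel

/-- Evaluation of polynomial functions at the vertex `j`. -/
def evalFun (j : Fin (n + 1)) : Fun k n →ₐ[k] k :=
  Ideal.Quotient.liftₐ (relIdeal k n) (MvPolynomial.aeval (Pi.single j 1)) (fun f hf => by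
    obtain ⟨g, rfl⟩ := Ideal.mem_span_singleton'.mp hf
    simp)

lemma evalFun_poly (j : Fin (n + 1)) (f : MvPolynomial (Fin (n + 1)) k) :
    evalFun j (poly f) = MvPolynomial.eval (Pi.single j 1) f := by
  rw [← MvPolynomial.aeval_eq_eval]
  rfl

/-- Evaluation of forms of degree zero at the vertex `j`. -/
def evalForm (j : Fin (n + 1)) : Form k n 0 →ₗ[k] k :=
  LinearMap.mul' k k ∘ₗ
    TensorProduct.map (evalFun j).toLinearMap (exteriorPower.zeroEquiv k (Cov k n)).toLinearMap ∘ₗ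
      Form.toTensor.toLinearMap

lemma evalForm_mk (j : Fin (n + 1)) (f : Fun k n) (x : ⋀[k]^0 (Cov k n)) :
    evalForm j (Form.mk f x) = evalFun j f * exteriorPower.zeroEquiv k (Cov k n) x := rfl

lemma evalForm_unit (j : Fin (n + 1)) : evalForm j (unit k n) = 1 := by
  rw [unit, evalForm_mk, map_one, exteriorPower.zeroEquiv_ιMulti, one_mul]

lemma coneForm_deRham_zero [CharZero k] (j : Fin (n + 1)) :
    coneForm j 0 ∘ₗ deRham k n 0 + (LinearMap.toSpanSingleton k _ (unit k n)) ∘ₗ evalForm j =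
      LinearMap.id := by
  apply form_ext
  intro f x
  simp only [LinearMap.add_apply, LinearMap.comp_apply, LinearMap.id_apply, coneForm_mk, deRham_mk,
    map_sum, contr_wedge_zero, sum_mk_contr_wedge, sum_conePoly_zero]
  have h2 : LinearMap.toSpanSingleton k _ (unit k n) (evalForm j (Form.mk (poly f) x)) =
      Form.mk (poly (MvPolynomial.C (MvPolynomial.eval (Pi.single j 1) f))) x := by
    rw [LinearMap.toSpanSingleton_apply, evalForm_mk, evalFun_poly, unit, mul_smul, ← map_smul]
    have hx : exteriorPower.zeroEquiv k (Cov k n) x • exteriorPower.ιMulti k 0 Fin.elim0 = x := by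
      apply (exteriorPower.zeroEquiv k (Cov k n)).injective
      rw [map_smul, exteriorPower.zeroEquiv_ιMulti, smul_eq_mul, mul_one]
    rw [hx, ← LinearMap.smul_apply, ← map_smul]
    congr 2
    rw [← MvPolynomial.algebraMap_eq, AlgHom.commutes, Algebra.algebraMap_eq_smul_one]
  rw [h2, map_sub, map_sub, LinearMap.sub_apply, sub_add_cancel]

lemma pull_coneForm {p q : ℕ} (f : Fin (p + 1) → Fin (q + 1)) (j : Fin (p + 1)) (r : ℕ) :
    pull r f ∘ₗ coneForm (k := k) (f j) r = coneForm j r ∘ₗ pull (r + 1) f := by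
  apply form_ext
  intro g x
  simp only [LinearMap.comp_apply, coneForm_mk, map_sum, pull_mk, pullFun_poly, map_mul,
    pullPoly_conePoly, pullPoly_X]
  have h (i : Fin (p + 1)) := LinearMap.congr_fun (contr_map (pullCov f) (edge (k := k) i j) r) x
  simp only [LinearMap.comp_apply, edge_pullCov] at h
  simp only [h]
  rw [← Finset.sum_fiberwise (g := f)]
  refine Finset.sum_congr rfl fun l _ => ?_
  rw [Finset.sum_mul, map_sum, LinearMap.sum_apply]
  refine Finset.sum_congr rfl fun i hi => ?_
  rw [(Finset.mem_filter.mp hi).2]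

lemma pull_mulForm {p q r : ℕ} (f : Fin (p + 1) → Fin (q + 1)) (g : Fun k q) :
    pull r f ∘ₗ mulForm g = mulForm (pullFun f g) ∘ₗ pull r f := by
  apply form_ext
  intro a x
  simp only [LinearMap.comp_apply, mulForm_mk, pull_mk, map_mul]

end Cone

end PolyDeRham

end

noncomputable section

namespace CechTuple

variable {ι X Y : Type*} [AddCommGroup X] [AddCommGroup Y]

/-- The Čech differential of a function on `m`-tuples. -/
def cech {m : ℕ} (c : (Fin m → ι) → X) (t : Fin (m + 1) → ι) : X :=
  ∑ l : Fin (m + 1), (-1 : ℤ) ^ (l : ℕ) • c (t ∘ l.succAbove)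

lemma cech_zero_apply (c : (Fin 0 → ι) → X) (t : Fin 1 → ι) (s : Fin 0 → ι) :
    cech c t = c s := by
  simp [cech, Subsingleton.elim (t ∘ Fin.succ) s]

lemma cech_cons {m : ℕ} (c : (Fin (m + 1) → ι) → X) (j : ι) (t : Fin (m + 1) → ι) :
    cech c (Fin.cons j t) = c t - cech (fun s => c (Fin.cons j s)) t := by
  rw [cech, Fin.sum_univ_succ, cech, sub_eq_add_neg, ← Finset.sum_neg_distrib]
  congr 1
  · simp only [Fin.val_zero, pow_zero, one_smul]
    congr 1
  · refine Finset.sum_congr rfl fun l _ => ?_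
    rw [Fin.val_succ, pow_succ, mul_neg_one, neg_smul]
    congr 3
    funext a
    refine Fin.cases ?_ (fun a => ?_) a
    · simp
    · simp

lemma map_cech {F : Type*} [FunLike F X Y] [AddMonoidHomClass F X Y] (g : F) {m : ℕ}
    (c : (Fin m → ι) → X) (t : Fin (m + 1) → ι) : g (cech c t) = cech (fun s => g (c s)) t := by
  simp only [cech, map_sum, map_zsmul]

lemma cech_sub {m : ℕ} (c c' : (Fin m → ι) → X) : cech (c - c') = cech c - cech c' := by
  funext t
  simp only [cech, Pi.sub_apply, smul_sub, Finset.sum_sub_distrib]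

lemma cech_fun_sum {σ : Type*} (s : Finset σ) {m : ℕ} (c : σ → (Fin m → ι) → X)
    (t : Fin (m + 1) → ι) : cech (fun u => ∑ j ∈ s, c j u) t = ∑ j ∈ s, cech (c j) t := by
  simp only [cech, Finset.smul_sum]
  rw [Finset.sum_comm]

lemma cech_cech {m : ℕ} (c : (Fin m → ι) → X) : cech (cech c) = 0 := by
  induction m with
  | zero =>
    funext t
    rw [← Fin.cons_self_tail t, cech_cons, cech_zero_apply c _ Fin.elim0]
    simp only [cech_zero_apply _ _ (Fin.elim0 : Fin 0 → ι)]
    exact sub_self _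
  | succ m ih =>
    funext t
    rw [← Fin.cons_self_tail t, cech_cons]
    have : (fun s => cech c (Fin.cons (t 0) s)) = c - cech (fun s => c (Fin.cons (t 0) s)) :=
      funext fun s => cech_cons c (t 0) s
    rw [this, cech_sub, ih, sub_zero, sub_self]
    rfl

/-- A function on tuples is alternating if a permutation acts on it by its sign. -/
def IsAlt {m : ℕ} (c : (Fin m → ι) → X) : Prop :=
  ∀ (t : Fin m → ι) (π : Equiv.Perm (Fin m)), c (t ∘ π) = (Equiv.Perm.sign π : ℤ) • c t

lemma isAlt_of_subsingleton {m : ℕ} [Subsingleton (Fin m)] (c : (Fin m → ι) → X) : IsAlt c := by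
  intro t π
  rw [Subsingleton.elim π 1]
  simp

lemma IsAlt.cons {m : ℕ} {c : (Fin (m + 1) → ι) → X} (hc : IsAlt c) (j : ι) :
    IsAlt fun s => c (Fin.cons j s) := by
  intro t π
  have h := hc (Fin.cons j t) (Equiv.Perm.decomposeFin.symm (0, π))
  rw [Equiv.Perm.decomposeFin.symm_sign, if_pos rfl, one_mul] at h
  refine Eq.trans (congrArg c ?_) h
  funext a
  refine Fin.cases ?_ (fun a => ?_) a
  · simp
  · simp

lemma IsAlt.swap {m : ℕ} {c : (Fin (m + 2) → ι) → X} (hc : IsAlt c) (j j' : ι) (t : Fin m → ι) :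
    c (Fin.cons j (Fin.cons j' t)) = -c (Fin.cons j' (Fin.cons j t)) := by
  have h := hc (Fin.cons j' (Fin.cons j t)) (Equiv.swap 0 1)
  rw [Equiv.Perm.sign_swap (by simp), Units.val_neg, Units.val_one, neg_one_smul] at h
  refine Eq.trans ?_ h
  congr 1
  funext a
  refine Fin.cases ?_ (fun a => Fin.cases ?_ (fun a => ?_) a) a
  · simp
  · simp
  · rw [Function.comp_apply, Equiv.swap_apply_of_ne_of_ne]
    · simp
    · simp
    · exact fun h => Fin.succ_ne_zero a (Fin.succ_injective _ h)

lemma isAlt_of_cons_of_swap {m : ℕ} {c : (Fin (m + 2) → ι) → X}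
    (h1 : ∀ j, IsAlt fun s => c (Fin.cons j s))
    (h2 : ∀ j j' t, c (Fin.cons j (Fin.cons j' t)) = -c (Fin.cons j' (Fin.cons j t))) :
    IsAlt c := by
  intro t π
  have hπ : π ∈ Submonoid.closure
      (Set.range fun i : Fin (m + 1) => Equiv.swap i.castSucc i.succ) := by
    rw [Equiv.Perm.mclosure_swap_castSucc_succ]
    trivial
  induction hπ using Submonoid.closure_induction generalizing t with
  | one => simp
  | mul x y _ _ hx hy =>
    rw [Equiv.Perm.coe_mul, ← Function.comp_assoc, hy, hx, smul_smul, map_mul, Units.val_mul,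
      mul_comm]
  | mem x hx =>
    obtain ⟨i, rfl⟩ := hx
    simp only
    rw [Equiv.Perm.sign_swap (Fin.castSucc_lt_succ).ne, Units.val_neg, Units.val_one, neg_one_smul]
    revert i
    refine Fin.cases ?_ fun i => ?_
    · have e1 : t = Fin.cons (t 0) (Fin.cons (t 1) (fun a => t a.succ.succ)) := by
        funext a
        refine Fin.cases ?_ (fun a => Fin.cases ?_ (fun a => ?_) a) a <;> simp
      conv_rhs => rw [e1, h2, neg_neg]
      congr 1
      funext a
      refine Fin.cases ?_ (fun a => Fin.cases ?_ (fun a => ?_) a) a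
      · simp
      · simp
      · rw [Function.comp_apply, Equiv.swap_apply_of_ne_of_ne]
        · simp
        · simp
        · exact fun h => Fin.succ_ne_zero a (Fin.succ_injective _ h)
    · have h := h1 (t 0) (Fin.tail t) (Equiv.swap i.castSucc i.succ)
      beta_reduce at h
      rw [Equiv.Perm.sign_swap (Fin.castSucc_lt_succ).ne, Units.val_neg, Units.val_one,
        neg_one_smul, Fin.cons_self_tail] at h
      rw [← h]
      congr 1
      funext a
      refine Fin.cases ?_ (fun a => ?_) a
      · rw [Function.comp_apply, Equiv.swap_apply_of_ne_of_ne]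
        · simp
        · rw [← Fin.succ_castSucc]
          exact (Fin.succ_ne_zero _).symm
        · exact (Fin.succ_ne_zero _).symm
      · simp only [Function.comp_apply, Fin.cons_succ, Fin.tail]
        rw [← Fin.succ_castSucc, (Fin.succ_injective _).swap_apply]

lemma IsAlt.sub {m : ℕ} {c c' : (Fin m → ι) → X} (hc : IsAlt c) (hc' : IsAlt c') :
    IsAlt (c - c') := by
  intro t π
  rw [Pi.sub_apply, Pi.sub_apply, hc, hc', smul_sub]

lemma IsAlt.cech {m : ℕ} {c : (Fin m → ι) → X} (hc : IsAlt c) : IsAlt (cech c) := by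
  induction m with
  | zero => exact isAlt_of_subsingleton (m := 1) _
  | succ m ih =>
    have hcons (j : ι) : (fun s => CechTuple.cech c (Fin.cons j s)) =
        c - CechTuple.cech (fun s => c (Fin.cons j s)) := funext fun s => cech_cons c j s
    refine isAlt_of_cons_of_swap (fun j => ?_) fun j j' t => ?_
    · rw [hcons]
      exact hc.sub (ih (hc.cons j))
    · rw [cech_cons, cech_cons]
      cases m with
      | zero =>
        rw [cech_zero_apply _ _ t, cech_zero_apply _ _ t]
        abel
      | succ m =>
        rw [cech_cons, cech_cons]
        simp only [hc.swap j j']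
        have hneg := map_cech (-AddMonoidHom.id X) (fun s => c (Fin.cons j' (Fin.cons j s))) t
        simp only [AddMonoidHom.neg_apply, AddMonoidHom.id_apply] at hneg
        rw [← hneg]
        abel

/-- An alternating function with values in a vector space of characteristic zero vanishes on tuples
with a repeated entry. -/
lemma IsAlt.eq_zero {k : Type*} [Field k] [CharZero k] [Module k X] {m : ℕ} {c : (Fin m → ι) → X}
    (hc : IsAlt c) (t : Fin m → ι) {a b : Fin m} (hab : a ≠ b) (h : t a = t b) : c t = 0 := by
  have h1 := hc t (Equiv.swap a b)
  have h2 : t ∘ Equiv.swap a b = t := by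
    funext x
    rw [Function.comp_apply, Equiv.swap_apply_def]
    split_ifs with hx hx' <;> simp_all
  rw [h2, Equiv.Perm.sign_swap hab, Units.val_neg, Units.val_one, neg_one_smul] at h1
  have h3 : (2 : k) • c t = 0 := by
    rw [two_smul]
    nth_rewrite 1 [h1]
    exact neg_add_cancel _
  exact (smul_eq_zero.mp h3).resolve_left two_ne_zero

end CechTuple

end

noncomputable section

namespace CosimplicialTot

open PolyDeRham CechTuple

variable {k : Type u} [Field k]
  (V : CosimplicialObject (CochainComplex (ModuleCat.{max u w} k) ℤ)) (i : ℤ)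

lemma mapV_id (n : ℕ) (x : comp V n i) : mapV V (𝟙 (SimplexCategory.mk n)) i x = x := by
  have := congrArg (fun h => ModuleCat.Hom.hom (HomologicalComplex.Hom.f h i))
    (V.map_id (SimplexCategory.mk n))
  exact LinearMap.congr_fun this x

section Normalization

/-- The alternating sum of the coface maps. -/
def bd (n : ℕ) : comp V n i →ₗ[k] comp V (n + 1) i :=
  ∑ l : Fin (n + 2), (-1 : ℤ) ^ (l : ℕ) • mapV V (SimplexCategory.δ l) i

lemma bd_apply (n : ℕ) (x : comp V n i) :
    bd V i n x = ∑ l : Fin (n + 2), (-1 : ℤ) ^ (l : ℕ) • mapV V (SimplexCategory.δ l) i x := by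
  simp [bd]

/-- The cochain complex of the cosimplicial vector space `V^{•,i}`. -/
abbrev cochains : CochainComplex (ModuleCat.{max u w} k) ℕ :=
  (AlgebraicTopology.alternatingCofaceMapComplex (ModuleCat.{max u w} k)).obj
    (((CosimplicialObject.whiskering _ _).obj
      (HomologicalComplex.eval (ModuleCat.{max u w} k) (ComplexShape.up ℤ) i)).obj V)

lemma cochains_d (n : ℕ) : (cochains V i).d n (n + 1) = ModuleCat.ofHom (bd V i n) := by
  refine (CochainComplex.of_d (V := ModuleCat.{max u w} k)
    (fun n => ((((CosimplicialObject.whiskering _ _).obj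
      (HomologicalComplex.eval (ModuleCat.{max u w} k) (ComplexShape.up ℤ) i)).obj V)).obj
        (SimplexCategory.mk n))
    (AlgebraicTopology.AlternatingCofaceMapComplex.objD _) n).trans ?_
  rw [AlgebraicTopology.AlternatingCofaceMapComplex.objD]
  refine ModuleCat.hom_ext (LinearMap.ext fun x => Eq.trans ?_ (bd_apply V i n x).symm)
  exact (LinearMap.congr_fun (ModuleCat.hom_sum _ _) x).trans (LinearMap.sum_apply _ _ _)

lemma bd_bd (n : ℕ) (x : comp V n i) : bd V i (n + 1) (bd V i n x) = 0 := by
  have h := (cochains V i).d_comp_d n (n + 1) (n + 2)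
  rw [cochains_d, cochains_d] at h
  exact LinearMap.congr_fun (congrArg ModuleCat.Hom.hom h) x

lemma exists_bd_eq (n : ℕ) (h : Limits.IsZero ((cochains V i).homology (n + 1)))
    (x : comp V (n + 1) i) (hx : bd V i (n + 1) x = 0) : ∃ y, bd V i n y = x := by
  rw [← HomologicalComplex.exactAt_iff_isZero_homology,
    HomologicalComplex.exactAt_iff' _ n (n + 1) (n + 2) (by simp) (by simp),
    ShortComplex.moduleCat_exact_iff] at h
  obtain ⟨y, hy⟩ := h x (by
    change (cochains V i).d (n + 1) (n + 2) x = 0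
    rw [cochains_d]
    exact hx)
  refine ⟨y, ?_⟩
  change (cochains V i).d n (n + 1) y = x at hy
  rw [cochains_d] at hy
  exact hy

variable {V i}

lemma mapV_eq_zero_of_collapse {m n : ℕ} {v : comp V (m + 1) i} {j : Fin (m + 1)}
    (hv : mapV V (SimplexCategory.σ j) i v = 0)
    (f : SimplexCategory.mk (m + 1) ⟶ SimplexCategory.mk n)
    (hf : fn f j.castSucc = fn f j.succ) : mapV V f i v = 0 := by
  have h : f = SimplexCategory.σ j ≫ SimplexCategory.δ j.succ ≫ f := by
    ext x : 3
    change fn f x = fn f (j.succ.succAbove (j.predAbove x))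
    rcases eq_or_ne x j.succ with rfl | hx
    · rw [← hf]
      congr 1
      simp
    · rw [Fin.succ_succAbove_predAbove hx]
  rw [h, mapV_comp, hv, map_zero]

lemma fn_comp {p q r : ℕ} (f : SimplexCategory.mk p ⟶ SimplexCategory.mk q)
    (g : SimplexCategory.mk q ⟶ SimplexCategory.mk r) : fn (f ≫ g) = fn g ∘ fn f := rfl

lemma fn_δ {n : ℕ} (l : Fin (n + 2)) : fn (SimplexCategory.δ l) = l.succAbove := rfl

lemma fn_σ {n : ℕ} (j : Fin (n + 1)) : fn (SimplexCategory.σ j) = j.predAbove := rfl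

lemma val_succAbove {n : ℕ} (l : Fin (n + 1)) (x : Fin n) :
    (l.succAbove x : ℕ) = if (x : ℕ) < l then (x : ℕ) else x + 1 := by
  rw [Fin.succAbove]
  split_ifs with h h' h' <;> simp_all [Fin.lt_def]

lemma val_predAbove {n : ℕ} (j : Fin n) (x : Fin (n + 1)) :
    (j.predAbove x : ℕ) = if (j : ℕ) < x then (x : ℕ) - 1 else x := by
  rw [Fin.predAbove]
  simp only [Fin.lt_def, Fin.val_castSucc]
  split_ifs <;> rfl

lemma mapV_σ_bd {m : ℕ} (u : comp V m i) (q : Fin (m + 1))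
    (H : ∀ l : Fin (m + 2), (l : ℕ) < q →
      mapV V (SimplexCategory.δ l ≫ SimplexCategory.σ q) i u = 0) :
    mapV V (SimplexCategory.σ q) i (bd V i m u) =
      ∑ l ∈ Finset.univ.filter fun l : Fin (m + 2) => (q : ℕ) + 2 ≤ l,
        (-1 : ℤ) ^ (l : ℕ) • mapV V (SimplexCategory.δ l ≫ SimplexCategory.σ q) i u := by
  have h1 : mapV V (SimplexCategory.σ q) i (bd V i m u) =
      ∑ l : Fin (m + 2), (-1 : ℤ) ^ (l : ℕ) •
        mapV V (SimplexCategory.δ l ≫ SimplexCategory.σ q) i u := by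
    rw [bd_apply, map_sum]
    simp only [map_zsmul, mapV_comp]
  rw [h1, ← Finset.sum_filter_add_sum_filter_not _ (fun l : Fin (m + 2) => (q : ℕ) + 2 ≤ l),
    add_eq_left]
  rw [Finset.sum_eq_add_of_mem q.castSucc q.succ (by simp) (by simp) (Fin.castSucc_lt_succ).ne]
  · rw [SimplexCategory.δ_comp_σ_self, SimplexCategory.δ_comp_σ_succ, mapV_id, Fin.val_succ,
      pow_succ, Fin.val_castSucc]
    simp
  · intro l hl hne
    have hl' : ¬ (q : ℕ) + 2 ≤ l := (Finset.mem_filter.mp hl).2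
    have h2 : (l : ℕ) ≠ q := fun h => hne.1 (Fin.ext h)
    have h3 : (l : ℕ) ≠ q + 1 := fun h => hne.2 (Fin.ext h)
    rw [H l (by omega), smul_zero]

lemma exists_normalized_step {m : ℕ} (v : comp V (m + 1) i) (q : Fin (m + 1))
    (hv : ∀ j : Fin (m + 1), j < q → mapV V (SimplexCategory.σ j) i v = 0)
    (hbd : mapV V (SimplexCategory.σ q.castSucc) i (bd V i (m + 1) v) = 0) :
    ∃ v', (∀ j : Fin (m + 1), j ≤ q → mapV V (SimplexCategory.σ j) i v' = 0) ∧
      bd V i (m + 1) v' = bd V i (m + 1) v := by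
  set u := mapV V (SimplexCategory.σ q) i v with hu
  have hrel : ∑ l ∈ Finset.univ.filter fun l : Fin (m + 2) => (q : ℕ) + 1 ≤ l,
      (-1 : ℤ) ^ (l : ℕ) • mapV V (SimplexCategory.δ l) i u = 0 := by
    rw [mapV_σ_bd] at hbd
    · rw [Finset.sum_filter, Fin.sum_univ_succ, if_neg (by simp), zero_add] at hbd
      rw [Finset.sum_filter, ← neg_eq_zero, ← Finset.sum_neg_distrib]
      refine Eq.trans ?_ hbd
      refine Finset.sum_congr rfl fun l _ => ?_
      by_cases hl : (q : ℕ) + 1 ≤ l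
      · rw [if_pos hl, if_pos (by simpa using hl), SimplexCategory.δ_comp_σ_of_gt (by
          rw [Fin.lt_def]; simpa using hl), mapV_comp, Fin.val_succ, pow_succ, mul_neg_one,
          neg_smul]
      · rw [if_neg hl, if_neg (by simpa using hl), neg_zero]
    · intro l hl
      rw [Fin.val_castSucc] at hl
      refine mapV_eq_zero_of_collapse (hv ⟨q - 1, by omega⟩ (Fin.lt_def.mpr (by dsimp; omega))) _ ?_
      apply Fin.ext
      simp only [fn_comp, fn_δ, fn_σ, Function.comp_apply, val_predAbove, val_succAbove,
        Fin.val_castSucc, Fin.val_succ]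
      split_ifs <;> omega
  have hσu (j : Fin (m + 1)) (hj : j ≤ q) (l : Fin (m + 2)) (hl : (l : ℕ) < j) :
      mapV V (SimplexCategory.δ l ≫ SimplexCategory.σ j) i u = 0 := by
    rw [hu, ← mapV_comp]
    have hj' := Fin.le_def.mp hj
    refine mapV_eq_zero_of_collapse (hv ⟨j - 1, by omega⟩ (Fin.lt_def.mpr (by dsimp; omega))) _ ?_
    apply Fin.ext
    simp only [fn_comp, fn_δ, fn_σ, Function.comp_apply, val_predAbove, val_succAbove,
      Fin.val_castSucc, Fin.val_succ]
    split_ifs <;> omega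
  have hq : mapV V (SimplexCategory.σ q) i (bd V i m u) = (-1 : ℤ) ^ (q : ℕ) • u := by
    rw [mapV_σ_bd u q (hσu q le_rfl)]
    have h := congrArg (mapV V (SimplexCategory.σ q) i) hrel
    rw [map_sum, map_zero] at h
    simp only [map_zsmul, ← mapV_comp] at h
    have hins : (Finset.univ.filter fun l : Fin (m + 2) => (q : ℕ) + 1 ≤ l) =
        insert q.succ (Finset.univ.filter fun l : Fin (m + 2) => (q : ℕ) + 2 ≤ l) := by
      ext l
      simp only [Finset.mem_filter, Finset.mem_univ, true_and, Finset.mem_insert, Fin.ext_iff,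
        Fin.val_succ]
      omega
    rw [hins, Finset.sum_insert (by simp), SimplexCategory.δ_comp_σ_succ, mapV_id, Fin.val_succ,
      pow_succ, mul_neg_one, neg_smul] at h
    exact (neg_add_eq_zero.mp h).symm
  refine ⟨v - (-1 : ℤ) ^ (q : ℕ) • bd V i m u, fun j hj => ?_, ?_⟩
  · rcases hj.eq_or_lt with rfl | hj
    · rw [map_sub, map_zsmul, hq, smul_smul, ← mul_pow]
      simp [hu]
    · rw [map_sub, hv j hj, map_zsmul, mapV_σ_bd u j (hσu j hj.le), Finset.sum_eq_zero]
      · simp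
      · intro l hl
        rw [hu, ← mapV_comp]
        have hl' : (j : ℕ) + 2 ≤ l := (Finset.mem_filter.mp hl).2
        have hj' := Fin.lt_def.mp hj
        rw [mapV_eq_zero_of_collapse (hv j hj), smul_zero]
        apply Fin.ext
        simp only [fn_comp, fn_δ, fn_σ, Function.comp_apply, val_predAbove, val_succAbove,
          Fin.val_castSucc, Fin.val_succ]
        split_ifs <;> omega
  · rw [map_sub, map_zsmul, bd_bd, smul_zero, sub_zero]

lemma exists_normalized {m : ℕ} (v : comp V (m + 1) i)
    (hbd : ∀ q : Fin (m + 2), mapV V (SimplexCategory.σ q) i (bd V i (m + 1) v) = 0) :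
    ∃ v', (∀ j : Fin (m + 1), mapV V (SimplexCategory.σ j) i v' = 0) ∧
      bd V i (m + 1) v' = bd V i (m + 1) v := by
  have key : ∀ q : ℕ, q ≤ m + 1 → ∃ v',
      (∀ j : Fin (m + 1), (j : ℕ) < q → mapV V (SimplexCategory.σ j) i v' = 0) ∧
        bd V i (m + 1) v' = bd V i (m + 1) v := by
    intro q hq
    induction q with
    | zero => exact ⟨v, by simp, rfl⟩
    | succ q ih =>
      obtain ⟨v₁, h₁, h₁'⟩ := ih (by omega)
      obtain ⟨v₂, h₂, h₂'⟩ := exists_normalized_step v₁ ⟨q, by omega⟩ (fun j hj => h₁ j hj)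
        (by rw [h₁']; exact hbd _)
      exact ⟨v₂, fun j hj => h₂ j (Nat.lt_succ_iff.mp hj), h₂'.trans h₁'⟩
  obtain ⟨v', h, h'⟩ := key (m + 1) le_rfl
  exact ⟨v', fun j => h j j.2, h'⟩

end Normalization

end CosimplicialTot

end

noncomputable section

namespace CosimplicialTot

open PolyDeRham CechTuple

variable {k : Type u} [Field k]
  {V : CosimplicialObject (CochainComplex (ModuleCat.{max u w} k) ℤ)} {i : ℤ}

section ConstantCochains

/-- Families `w n t ∈ V^{n,i}` indexed by the `m`-tuples `t` of vertices of `[n]`, natural in `[n]`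
and alternating in `t`. -/
structure IsCochain {m : ℕ} (w : ∀ n : ℕ, (Fin m → Fin (n + 1)) → comp V n i) : Prop where
  nat : ∀ (p q : ℕ) (f : SimplexCategory.mk p ⟶ SimplexCategory.mk q) (t : Fin m → Fin (p + 1)),
    mapV V f i (w p t) = w q (fn f ∘ t)
  alt : ∀ n, IsAlt (w n)

variable {m : ℕ}

lemma IsCochain.sub {w w' : ∀ n : ℕ, (Fin m → Fin (n + 1)) → comp V n i} (h : IsCochain w)
    (h' : IsCochain w') : IsCochain (w - w') where
  nat p q f t := by
    rw [Pi.sub_apply, Pi.sub_apply, Pi.sub_apply, Pi.sub_apply, map_sub, h.nat, h'.nat]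
  alt n := (h.alt n).sub (h'.alt n)

lemma IsCochain.cech {w : ∀ n : ℕ, (Fin m → Fin (n + 1)) → comp V n i} (h : IsCochain w) :
    IsCochain fun n => cech (w n) where
  nat p q f t := by
    rw [map_cech]
    simp only [h.nat]
    rfl
  alt n := (h.alt n).cech

/-- The morphism of `Δ` given by a monotone map. -/
def homOfMonotone {m n : ℕ} (t : Fin (m + 1) → Fin (n + 1)) (ht : Monotone t) :
    SimplexCategory.mk m ⟶ SimplexCategory.mk n :=
  SimplexCategory.Hom.mk ⟨t, ht⟩

lemma fn_homOfMonotone {m n : ℕ} (t : Fin (m + 1) → Fin (n + 1)) (ht : Monotone t) :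
    fn (homOfMonotone t ht) = t := rfl

lemma IsCochain.eq_zero {w : ∀ n : ℕ, (Fin (m + 1) → Fin (n + 1)) → comp V n i}
    (h : IsCochain w) (h0 : w m id = 0) : w = 0 := by
  funext n t
  have h1 := h.nat m n (homOfMonotone _ (Tuple.monotone_sort t)) id
  rw [h0, map_zero, fn_homOfMonotone, Function.comp_id, h.alt n] at h1
  have h2 := congrArg (fun x => (Equiv.Perm.sign (Tuple.sort t) : ℤ) • x) h1
  simp only [smul_zero, smul_smul, ← Units.val_mul, Int.units_mul_self, Units.val_one,
    one_smul] at h2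
  exact h2.symm

/-- An element of `V^{m,i}` killed by all codegeneracies. -/
def IsNormalized (v : comp V m i) : Prop :=
  ∀ (n : ℕ) (f : SimplexCategory.mk m ⟶ SimplexCategory.mk n),
    ¬ Function.Injective (fn f) → mapV V f i v = 0

lemma isNormalized_of_σ {v : comp V (m + 1) i}
    (hv : ∀ j : Fin (m + 1), mapV V (SimplexCategory.σ j) i v = 0) : IsNormalized v := by
  intro n f hf
  have hmono : Monotone (fn f) := f.toOrderHom.monotone
  have : ∃ j : Fin (m + 1), fn f j.castSucc = fn f j.succ := by
    by_contra! hne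
    exact hf (Fin.strictMono_iff_lt_succ.mpr fun j =>
      lt_of_le_of_ne (hmono (Fin.castSucc_lt_succ).le) (hne j)).injective
  obtain ⟨j, hj⟩ := this
  exact mapV_eq_zero_of_collapse (hv j) f hj

open Classical in
/-- The value of `v` on a monotone tuple, extended by zero. -/
def monoPart (v : comp V m i) (n : ℕ) (t : Fin (m + 1) → Fin (n + 1)) : comp V n i :=
  if h : Monotone t then mapV V (homOfMonotone t h) i v else 0

lemma mapV_monoPart {v : comp V m i} (hv : IsNormalized v) {p q : ℕ}
    (f : SimplexCategory.mk p ⟶ SimplexCategory.mk q) (t : Fin (m + 1) → Fin (p + 1)) :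
    mapV V f i (monoPart v p t) = monoPart v q (fn f ∘ t) := by
  have hf : Monotone (fn f) := f.toOrderHom.monotone
  by_cases ht : Monotone t
  · rw [monoPart, dif_pos ht, monoPart, dif_pos (hf.comp ht), ← mapV_comp]
    rfl
  · rw [monoPart, dif_neg ht, map_zero, monoPart]
    split_ifs with h
    · refine (hv _ _ fun hinj => ht fun a b hab => ?_).symm
      by_contra! hlt
      have h1 : fn f (t a) = fn f (t b) := le_antisymm (h hab) (hf hlt.le)
      have h2 : a = b := hinj h1
      rw [h2] at hlt
      exact lt_irrefl _ hlt
    · rfl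

/-- The alternating natural family attached to an element of `V^{m,i}`. -/
def altFamily (v : comp V m i) (n : ℕ) (t : Fin (m + 1) → Fin (n + 1)) : comp V n i :=
  ∑ π : Equiv.Perm (Fin (m + 1)), (Equiv.Perm.sign π : ℤ) • monoPart v n (t ∘ π)

lemma isCochain_altFamily {v : comp V m i} (hv : IsNormalized v) : IsCochain (altFamily v) where
  nat p q f t := by
    rw [altFamily, map_sum]
    simp only [map_zsmul, mapV_monoPart hv]
    rfl
  alt n t ρ := by
    rw [altFamily, altFamily, Finset.smul_sum]
    refine Fintype.sum_equiv (Equiv.mulLeft ρ) _ _ fun π => ?_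
    rw [Equiv.coe_mulLeft, smul_smul, map_mul, ← Units.val_mul, ← mul_assoc, Int.units_mul_self,
      one_mul]
    rfl

lemma altFamily_id (v : comp V m i) : altFamily v m id = v := by
  rw [altFamily, Finset.sum_eq_single 1]
  · rw [monoPart, dif_pos (by exact monotone_id)]
    rw [Equiv.Perm.sign_one, Units.val_one, one_smul]
    exact mapV_id V i m v
  · intro π _ hπ
    rw [monoPart, dif_neg, smul_zero]
    intro hmono
    apply hπ
    have hs : StrictMono π := hmono.strictMono_of_injective π.injective
    ext a
    exact congrArg Fin.val (congrFun (StrictMono.eq_id hs) a)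
  · simp

lemma IsCochain.exists_cech_eq [CharZero k]
    (hac : ∀ j : ℕ, j ≠ 0 → Limits.IsZero ((cochains V i).homology j))
    {w : ∀ n : ℕ, (Fin (m + 2) → Fin (n + 1)) → comp V n i} (h : IsCochain w)
    (hw : ∀ n, CechTuple.cech (w n) = 0) :
    ∃ v : ∀ n : ℕ, (Fin (m + 1) → Fin (n + 1)) → comp V n i,
      IsCochain v ∧ ∀ n, CechTuple.cech (v n) = w n := by
  have hσ (q : Fin (m + 1)) : mapV V (SimplexCategory.σ q) i (w (m + 1) id) = 0 := by
    rw [h.nat]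
    refine (h.alt m).eq_zero (k := k) _ (Fin.castSucc_lt_succ (i := q)).ne ?_
    rw [Function.comp_id, fn_σ, Fin.predAbove_castSucc_self, Fin.predAbove_succ_self]
  have hbd : bd V i (m + 1) (w (m + 1) id) = 0 := by
    rw [bd_apply]
    simp only [h.nat]
    exact congrFun (hw (m + 2)) id
  obtain ⟨v, hv, hvw⟩ : ∃ v, IsNormalized v ∧ bd V i m v = w (m + 1) id := by
    obtain ⟨v, hv⟩ := exists_bd_eq V i m (hac _ (Nat.succ_ne_zero m)) _ hbd
    cases m with
    | zero => exact ⟨v, fun n f hf => absurd (fun a b _ => Subsingleton.elim (α := Fin 1) a b) hf, hv⟩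
    | succ m =>
      obtain ⟨v', h1, h2⟩ := exists_normalized v (fun q => by rw [hv]; exact hσ q)
      exact ⟨v', isNormalized_of_σ h1, h2.trans hv⟩
  have hc := isCochain_altFamily hv
  refine ⟨altFamily v, hc, fun n => ?_⟩
  have key : (fun n => CechTuple.cech (altFamily v n)) - w = 0 := by
    refine (hc.cech.sub h).eq_zero ?_
    rw [Pi.sub_apply, Pi.sub_apply, sub_eq_zero, ← hvw, bd_apply]
    refine Finset.sum_congr rfl fun l _ => ?_
    congr 1
    conv_rhs => rw [← altFamily_id v, hc.nat]
    rfl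
  exact congrFun (sub_eq_zero.mp key) n

end ConstantCochains

end CosimplicialTot

end

noncomputable section

namespace PolyDeRham

variable {k : Type u} [Field k] {n : ℕ} {X : Type*} [AddCommGroup X] [Module k X]

lemma deRham_coneForm_tensor [CharZero k] {p : ℕ} (j : Fin (n + 1)) (x : Form k n (p + 1) ⊗[k] X)
    (hx : (deRham k n (p + 1)).rTensor X x = 0) :
    (deRham k n p).rTensor X ((coneForm j p).rTensor X x) = x := by
  have h := LinearMap.congr_fun (congrArg (LinearMap.rTensor X) (deRham_coneForm_add (k := k) j p)) x
  rw [LinearMap.rTensor_add, LinearMap.rTensor_comp, LinearMap.rTensor_comp, LinearMap.add_apply,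
    LinearMap.comp_apply, LinearMap.comp_apply, hx, map_zero, add_zero, LinearMap.rTensor_id] at h
  exact h

/-- The value at a vertex of a form of degree zero with coefficients in `X`. -/
def evalTensor (j : Fin (n + 1)) : Form k n 0 ⊗[k] X →ₗ[k] X :=
  (TensorProduct.lid k X).toLinearMap ∘ₗ (evalForm j).rTensor X

lemma evalTensor_unit (j : Fin (n + 1)) (x : X) : evalTensor j (unit k n ⊗ₜ[k] x) = x := by
  simp [evalTensor, evalForm_unit]

lemma eq_unit_tmul_of_closed [CharZero k] (j : Fin (n + 1)) (x : Form k n 0 ⊗[k] X)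
    (hx : (deRham k n 0).rTensor X x = 0) : x = unit k n ⊗ₜ evalTensor j x := by
  have h := LinearMap.congr_fun (congrArg (LinearMap.rTensor X) (coneForm_deRham_zero (k := k) j)) x
  rw [LinearMap.rTensor_add, LinearMap.rTensor_comp, LinearMap.rTensor_comp, LinearMap.add_apply,
    LinearMap.comp_apply, LinearMap.comp_apply, hx, map_zero, zero_add, LinearMap.rTensor_id] at h
  have h2 (y : k ⊗[k] X) : (LinearMap.toSpanSingleton k _ (unit k n)).rTensor X y =
      unit k n ⊗ₜ TensorProduct.lid k X y := by
    induction y using TensorProduct.induction_on with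
    | zero => simp
    | tmul c y => simp [TensorProduct.smul_tmul]
    | add y y' hy hy' => rw [map_add, hy, hy', map_add, TensorProduct.tmul_add]
  rw [h2] at h
  exact h.symm

lemma sum_mulForm_X {p : ℕ} (x : Form k n p ⊗[k] X) :
    ∑ j, (mulForm (poly (MvPolynomial.X j))).rTensor X x = x := by
  have h : ∑ j, mulForm (p := p) (poly (MvPolynomial.X j : MvPolynomial (Fin (n + 1)) k)) =
      LinearMap.id := by
    apply form_ext
    intro f y
    simp only [LinearMap.sum_apply, mulForm_mk, LinearMap.id_apply]
    rw [← LinearMap.sum_apply, ← map_sum, ← Finset.sum_mul, ← map_sum, poly_sum_X, one_mul]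
  have h2 := LinearMap.congr_fun (congrArg (LinearMap.rTensorHom X) h) x
  rw [map_sum, LinearMap.sum_apply] at h2
  simpa using h2

end PolyDeRham

namespace CosimplicialTot

open PolyDeRham CechTuple

variable {k : Type u} [Field k]
  {V : CosimplicialObject (CochainComplex (ModuleCat.{max u w} k) ℤ)} {i : ℤ}

section MinVertex

variable {m n : ℕ}

/-- The smallest entry of a tuple of vertices. -/
def minVertex (t : Fin (m + 1) → Fin (n + 1)) : Fin (n + 1) :=
  Finset.univ.inf' Finset.univ_nonempty t

lemma minVertex_perm (t : Fin (m + 1) → Fin (n + 1)) (π : Equiv.Perm (Fin (m + 1))) :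
    minVertex (t ∘ π) = minVertex t := by
  apply le_antisymm
  · refine Finset.le_inf' _ _ fun a _ => ?_
    have := Finset.inf'_le (t ∘ π) (Finset.mem_univ (π.symm a))
    rwa [Function.comp_apply, Equiv.apply_symm_apply] at this
  · exact Finset.le_inf' _ _ fun a _ => Finset.inf'_le t (Finset.mem_univ (π a))

lemma minVertex_comp {q : ℕ} (f : SimplexCategory.mk n ⟶ SimplexCategory.mk q)
    (t : Fin (m + 1) → Fin (n + 1)) : minVertex (fn f ∘ t) = fn f (minVertex t) := by
  apply le_antisymm
  · obtain ⟨a, _, ha⟩ := Finset.exists_mem_eq_inf' (Finset.univ_nonempty) t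
    rw [minVertex, minVertex, ha]
    exact Finset.inf'_le (fn f ∘ t) (Finset.mem_univ a)
  · exact Finset.le_inf' _ _ fun a _ => f.toOrderHom.monotone (Finset.inf'_le t (Finset.mem_univ a))

end MinVertex

section FormCochains

variable {m r : ℕ}

/-- Families `b n t ∈ Ωₙʳ ⊗ V^{n,i}` indexed by the `m`-tuples `t` of vertices of `[n]`, natural in
`[n]` and alternating in `t`. -/
structure IsFormCochain (b : ∀ n : ℕ, (Fin m → Fin (n + 1)) → Form k n r ⊗[k] comp V n i) :
    Prop where
  nat : ∀ (p q : ℕ) (f : SimplexCategory.mk p ⟶ SimplexCategory.mk q) (t : Fin m → Fin (p + 1)),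
    (mapV V f i).lTensor (Form k p r) (b p t) =
      (pull r (fn f)).rTensor (comp V q i) (b q (fn f ∘ t))
  alt : ∀ n, IsAlt (b n)

variable {b b' : ∀ n : ℕ, (Fin m → Fin (n + 1)) → Form k n r ⊗[k] comp V n i}

lemma IsFormCochain.sub (h : IsFormCochain b) (h' : IsFormCochain b') :
    IsFormCochain (b - b') where
  nat p q f t := by
    rw [Pi.sub_apply, Pi.sub_apply, Pi.sub_apply, Pi.sub_apply, map_sub, map_sub, h.nat, h'.nat]
  alt n := (h.alt n).sub (h'.alt n)

lemma IsFormCochain.cech (h : IsFormCochain b) : IsFormCochain fun n => cech (b n) where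
  nat p q f t := by
    rw [map_cech, map_cech]
    simp only [h.nat]
    rfl
  alt n := (h.alt n).cech

/-- The de Rham differential of a family of forms. -/
def formD (b : ∀ n : ℕ, (Fin m → Fin (n + 1)) → Form k n r ⊗[k] comp V n i) (n : ℕ)
    (t : Fin m → Fin (n + 1)) : Form k n (r + 1) ⊗[k] comp V n i :=
  (deRham k n r).rTensor (comp V n i) (b n t)

lemma formD_sub : formD (b - b') = formD b - formD b' := by
  funext n t
  simp only [formD, Pi.sub_apply, map_sub]

lemma formD_formD : formD (formD b) = 0 := by
  funext n t
  exact rTensor_deRham_deRham V n r i _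

lemma cech_formD (n : ℕ) : CechTuple.cech (formD b n) = formD (fun n => CechTuple.cech (b n)) n := by
  funext t
  simp only [formD, map_cech]
  rfl

lemma pull_deRham_tensor {p q : ℕ} (f : Fin (p + 1) → Fin (q + 1)) {X : Type*} [AddCommGroup X]
    [Module k X] (x : Form k q r ⊗[k] X) :
    (pull (r + 1) f).rTensor X ((deRham k q r).rTensor X x) =
      (deRham k p r).rTensor X ((pull r f).rTensor X x) := by
  rw [← LinearMap.comp_apply, ← LinearMap.rTensor_comp, pull_deRham, LinearMap.rTensor_comp,
    LinearMap.comp_apply]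

lemma IsFormCochain.formD (h : IsFormCochain b) : IsFormCochain (formD b) where
  nat p q f t := by
    rw [CosimplicialTot.formD, CosimplicialTot.formD, lTensor_rTensor, h.nat, pull_deRham_tensor]
  alt n t π := by rw [CosimplicialTot.formD, CosimplicialTot.formD, h.alt n, map_zsmul]

/-- Contraction of the Čech differential by the partition of unity `t₀ + ⋯ + tₙ = 1`. -/
def cechContract (b : ∀ n : ℕ, (Fin (m + 1) → Fin (n + 1)) → Form k n r ⊗[k] comp V n i) (n : ℕ)
    (t : Fin m → Fin (n + 1)) : Form k n r ⊗[k] comp V n i :=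
  ∑ j, (mulForm (poly (MvPolynomial.X j))).rTensor (comp V n i) (b n (Fin.cons j t))

lemma IsFormCochain.cechContract
    {b : ∀ n : ℕ, (Fin (m + 1) → Fin (n + 1)) → Form k n r ⊗[k] comp V n i}
    (h : IsFormCochain b) : IsFormCochain (cechContract b) where
  nat p q f t := by
    have hcons (j : Fin (p + 1)) : fn f ∘ (Fin.cons j t : Fin (m + 1) → Fin (p + 1)) =
        Fin.cons (fn f j) (fn f ∘ t) := by
      funext a
      refine Fin.cases ?_ (fun a => ?_) a <;> simp
    rw [CosimplicialTot.cechContract, CosimplicialTot.cechContract, map_sum, map_sum]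
    rw [← Finset.sum_fiberwise (g := fn f)]
    refine Finset.sum_congr rfl fun l _ => ?_
    have h1 (x : Form k q r ⊗[k] comp V q i) : (pull r (fn f)).rTensor (comp V q i)
        ((mulForm (poly (MvPolynomial.X l))).rTensor (comp V q i) x) =
        ∑ j with fn f j = l, (mulForm (poly (MvPolynomial.X j))).rTensor (comp V q i)
          ((pull r (fn f)).rTensor (comp V q i) x) := by
      have h2 : ∑ j with fn f j = l,
          mulForm (p := r) (poly (MvPolynomial.X j : MvPolynomial (Fin (p + 1)) k)) =
          mulForm (pullFun (fn f) (poly (MvPolynomial.X l))) := by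
        apply form_ext
        intro g y
        simp only [LinearMap.sum_apply, mulForm_mk]
        rw [← LinearMap.sum_apply, ← map_sum, ← Finset.sum_mul, ← map_sum, pullFun_poly, pullPoly_X]
      rw [← LinearMap.comp_apply, ← LinearMap.rTensor_comp, pull_mulForm, ← h2,
        LinearMap.rTensor_comp, LinearMap.comp_apply, ← LinearMap.coe_rTensorHom, map_sum,
        LinearMap.sum_apply]
    rw [h1]
    refine Finset.sum_congr rfl fun j hj => ?_
    rw [lTensor_rTensor, h.nat, hcons, (Finset.mem_filter.mp hj).2]
  alt n t π := by
    rw [CosimplicialTot.cechContract, CosimplicialTot.cechContract, Finset.smul_sum]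
    refine Finset.sum_congr rfl fun j _ => ?_
    rw [← map_zsmul]
    exact congrArg _ ((h.alt n).cons j t π)

lemma cech_cechContract
    {b : ∀ n : ℕ, (Fin (m + 1) → Fin (n + 1)) → Form k n r ⊗[k] comp V n i} {n : ℕ}
    (hb : CechTuple.cech (b n) = 0) : CechTuple.cech (cechContract b n) = b n := by
  funext t
  have h (j : Fin (n + 1)) : CechTuple.cech (fun s => b n (Fin.cons j s)) t = b n t := by
    have := congrFun hb (Fin.cons j t)
    rw [cech_cons] at this
    exact (sub_eq_zero.mp this).symm
  conv_rhs => rw [← sum_mulForm_X (b n t)]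
  unfold cechContract
  rw [cech_fun_sum]
  refine Finset.sum_congr rfl fun j _ => ?_
  rw [← map_cech, h]

/-- Contraction of the de Rham differential, using the cone on the smallest vertex. -/
def formContract (b : ∀ n : ℕ, (Fin (m + 1) → Fin (n + 1)) → Form k n (r + 1) ⊗[k] comp V n i)
    (n : ℕ) (t : Fin (m + 1) → Fin (n + 1)) : Form k n r ⊗[k] comp V n i :=
  (coneForm (minVertex t) r).rTensor (comp V n i) (b n t)

lemma IsFormCochain.formContract
    {b : ∀ n : ℕ, (Fin (m + 1) → Fin (n + 1)) → Form k n (r + 1) ⊗[k] comp V n i}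
    (h : IsFormCochain b) : IsFormCochain (formContract b) where
  nat p q f t := by
    rw [CosimplicialTot.formContract, CosimplicialTot.formContract, lTensor_rTensor, h.nat,
      minVertex_comp, ← LinearMap.comp_apply, ← LinearMap.rTensor_comp, ← pull_coneForm,
      LinearMap.rTensor_comp, LinearMap.comp_apply]
  alt n t π := by
    rw [CosimplicialTot.formContract, CosimplicialTot.formContract, h.alt n, map_zsmul,
      minVertex_perm]

lemma formD_formContract [CharZero k]
    {b : ∀ n : ℕ, (Fin (m + 1) → Fin (n + 1)) → Form k n (r + 1) ⊗[k] comp V n i}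
    (hb : formD b = 0) : formD (formContract b) = b := by
  funext n t
  exact deRham_coneForm_tensor _ _ (congrFun (congrFun hb n) t)

/-- The family of constant forms attached to a family of cochains. -/
def constForm (v : ∀ n : ℕ, (Fin m → Fin (n + 1)) → comp V n i) (n : ℕ)
    (t : Fin m → Fin (n + 1)) : Form k n 0 ⊗[k] comp V n i :=
  unit k n ⊗ₜ v n t

lemma IsCochain.constForm {v : ∀ n : ℕ, (Fin m → Fin (n + 1)) → comp V n i}
    (h : IsCochain v) : IsFormCochain (constForm v) where
  nat p q f t := by
    rw [CosimplicialTot.constForm, CosimplicialTot.constForm, LinearMap.lTensor_tmul,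
      LinearMap.rTensor_tmul, pull_unit, h.nat]
  alt n t π := by
    rw [CosimplicialTot.constForm, CosimplicialTot.constForm, h.alt n, TensorProduct.tmul_smul]

lemma formD_constForm (v : ∀ n : ℕ, (Fin m → Fin (n + 1)) → comp V n i) :
    formD (constForm v) = 0 := by
  funext n t
  rw [formD, constForm, LinearMap.rTensor_tmul, deRham_unit, TensorProduct.zero_tmul]
  rfl

lemma cech_constForm (v : ∀ n : ℕ, (Fin m → Fin (n + 1)) → comp V n i) (n : ℕ) :
    CechTuple.cech (constForm v n) = constForm (fun n => CechTuple.cech (v n)) n := by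
  funext t
  exact (map_cech (TensorProduct.mk k (Form k n 0) (comp V n i) (unit k n)) (v n) t).symm

lemma constForm_injective {v v' : ∀ n : ℕ, (Fin m → Fin (n + 1)) → comp V n i} {n : ℕ}
    (h : constForm v n = constForm v' n) : v n = v' n := by
  funext t
  have := congrArg (evalTensor 0) (congrFun h t)
  simpa only [constForm, evalTensor_unit] using this

lemma IsFormCochain.exists_constForm [CharZero k]
    {b : ∀ n : ℕ, (Fin m → Fin (n + 1)) → Form k n 0 ⊗[k] comp V n i}
    (h : IsFormCochain b) (hb : CosimplicialTot.formD b = 0) :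
    ∃ v, IsCochain v ∧ b = CosimplicialTot.constForm v := by
  have hv : b = CosimplicialTot.constForm fun n t => evalTensor 0 (b n t) := by
    funext n t
    exact eq_unit_tmul_of_closed 0 _ (congrFun (congrFun hb n) t)
  refine ⟨fun n t => evalTensor 0 (b n t), ⟨fun p q f t => ?_, fun n t π => ?_⟩, hv⟩
  · have h1 := h.nat p q f t
    rw [congrFun (congrFun hv p) t, congrFun (congrFun hv q) (fn f ∘ t),
      CosimplicialTot.constForm, CosimplicialTot.constForm, LinearMap.lTensor_tmul,
      LinearMap.rTensor_tmul, pull_unit] at h1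
    have h2 := congrArg (evalTensor 0) h1
    rwa [evalTensor_unit, evalTensor_unit] at h2
  · change evalTensor 0 (b n (t ∘ π)) = _ • evalTensor 0 (b n t)
    rw [h.alt n, map_zsmul]

lemma IsFormCochain.exists_primitive [CharZero k]
    (hac : ∀ j : ℕ, j ≠ 0 → Limits.IsZero ((cochains V i).homology j)) (r : ℕ) :
    ∀ (m : ℕ) (z : ∀ n : ℕ, (Fin (m + 1) → Fin (n + 1)) → Form k n (r + 1) ⊗[k] comp V n i),
      IsFormCochain z → CosimplicialTot.formD z = 0 → (∀ n, CechTuple.cech (z n) = 0) →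
      ∃ y, IsFormCochain y ∧ CosimplicialTot.formD y = z ∧ ∀ n, CechTuple.cech (y n) = 0 := by
  induction r with
  | zero =>
    intro m z hz hdz hδz
    have hy := hz.formContract
    have hdy := formD_formContract hdz
    obtain ⟨w, hw, hyw⟩ := hy.cech.exists_constForm (by
      funext n
      rw [← cech_formD, hdy, hδz]
      rfl)
    have hyw' (n : ℕ) := congrFun hyw n
    obtain ⟨v, hv, hvw⟩ := hw.exists_cech_eq hac (fun n => by
      have : CosimplicialTot.constForm (fun n => CechTuple.cech (w n)) n =
          CosimplicialTot.constForm (fun _ _ => 0) n := by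
        rw [← cech_constForm, ← hyw', cech_cech]
        funext t
        exact (TensorProduct.tmul_zero _ _).symm
      exact constForm_injective this)
    refine ⟨_, hy.sub hv.constForm, ?_, fun n => ?_⟩
    · rw [formD_sub, hdy, formD_constForm, sub_zero]
    · rw [Pi.sub_apply, cech_sub, hyw', cech_constForm, funext hvw, sub_self]
  | succ r ih =>
    intro m z hz hdz hδz
    have hy := hz.formContract
    have hdy := formD_formContract hdz
    obtain ⟨x, hx, hdx, hδx⟩ := ih (m + 1) _ hy.cech (by
      funext n
      rw [← cech_formD, hdy, hδz]
      rfl) (fun n => cech_cech _)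
    refine ⟨_, hy.sub hx.cechContract.formD, ?_, fun n => ?_⟩
    · rw [formD_sub, hdy, formD_formD, sub_zero]
    · rw [Pi.sub_apply, cech_sub, cech_formD, funext fun n => cech_cechContract (hδx n), hdx,
        sub_self]

end FormCochains

section Rows

variable {r : ℕ}

/-- The compatibility condition of the totalization for a family of `r`-forms with values in
`V^{•,i}`. -/
def Compatible (a : ∀ n : ℕ, Form k n r ⊗[k] comp V n i) : Prop :=
  ∀ (p q : ℕ) (f : SimplexCategory.mk p ⟶ SimplexCategory.mk q),
    (mapV V f i).lTensor (Form k p r) (a p) = (pull r (fn f)).rTensor (comp V q i) (a q)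

lemma Compatible.exists_deRham_eq [CharZero k]
    (hac : ∀ j : ℕ, j ≠ 0 → Limits.IsZero ((cochains V i).homology j))
    {a : ∀ n : ℕ, Form k n (r + 1) ⊗[k] comp V n i} (ha : Compatible a)
    (hd : ∀ n, (deRham k n (r + 1)).rTensor (comp V n i) (a n) = 0) :
    ∃ b : ∀ n : ℕ, Form k n r ⊗[k] comp V n i, Compatible b ∧
      ∀ n, (deRham k n r).rTensor (comp V n i) (b n) = a n := by
  have hc : IsFormCochain fun n (_ : Fin 0 → Fin (n + 1)) => a n :=
    ⟨fun p q f _ => ha p q f, fun n => isAlt_of_subsingleton _⟩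
  obtain ⟨y, hy, hdy, hδy⟩ := IsFormCochain.exists_primitive hac r 0 _ hc.cech
    (by
      funext n t
      rw [formD, cech_zero_apply _ _ Fin.elim0, hd]
      rfl)
    (fun n => cech_cech _)
  have hb := hy.cechContract
  have hyb (n : ℕ) := cech_cechContract (hδy n)
  refine ⟨fun n => cechContract y n Fin.elim0, fun p q f => ?_, fun n => ?_⟩
  · rw [hb.nat p q f, Subsingleton.elim (fn f ∘ _) (Fin.elim0 : Fin 0 → Fin (q + 1))]
  · have h1 := congrFun (congrFun hdy n) fun _ => 0
    rw [formD, ← hyb, cech_zero_apply _ _ Fin.elim0, cech_zero_apply _ _ Fin.elim0] at h1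
    exact h1

lemma Compatible.exists_ker_of_closed [CharZero k]
    {a : ∀ n : ℕ, Form k n 0 ⊗[k] comp V n i} (ha : Compatible a)
    (hd : ∀ n, (deRham k n 0).rTensor (comp V n i) (a n) = 0) :
    ∃ x ∈ kerSub V i, ∀ n, a n = unit k n ⊗ₜ mapV V (vertex n) i x := by
  have hc : IsFormCochain fun n (_ : Fin 0 → Fin (n + 1)) => a n :=
    ⟨fun p q f _ => ha p q f, fun n => isAlt_of_subsingleton _⟩
  obtain ⟨v, hv, hav⟩ := hc.exists_constForm (by funext n t; exact hd n)
  have hnat {n : ℕ} (f : SimplexCategory.mk 0 ⟶ SimplexCategory.mk n) :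
      mapV V f i (v 0 Fin.elim0) = v n Fin.elim0 := by
    rw [hv.nat, Subsingleton.elim (fn f ∘ _) (Fin.elim0 : Fin 0 → Fin (n + 1))]
  refine ⟨v 0 Fin.elim0, ?_, fun n => ?_⟩
  · exact (hnat (SimplexCategory.δ (0 : Fin 2))).trans (hnat (SimplexCategory.δ (1 : Fin 2))).symm
  · rw [hnat]
    exact congrFun (congrFun hav n) Fin.elim0

end Rows

end CosimplicialTot

end

noncomputable section

namespace CosimplicialTot

open PolyDeRham

lemma quasiIso_of_forall_exists {R : Type*} [Ring R] {K L : CochainComplex (ModuleCat R) ℤ}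
    (φ : K ⟶ L) (hinj : ∀ m, Function.Injective (φ.f m))
    (h : ∀ m m' : ℤ, m + 1 = m' → ∀ (y : L.X m) (x' : K.X m'), L.d m m' y = φ.f m' x' →
      ∃ (x : K.X m) (z : L.X (m - 1)), y = φ.f m x + L.d (m - 1) m z) : QuasiIso φ := by
  have hφ (i j : ℤ) (x : K.X i) : L.d i j (φ.f i x) = φ.f j (K.d i j x) :=
    LinearMap.congr_fun (congrArg ModuleCat.Hom.hom (φ.comm i j)) x
  have hL (i j l : ℤ) (x : L.X i) : L.d j l (L.d i j x) = 0 :=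
    LinearMap.congr_fun (congrArg ModuleCat.Hom.hom (L.d_comp_d i j l)) x
  rw [quasiIso_iff]
  intro m
  rw [quasiIsoAt_iff_isIso_homologyMap]
  have hprev : (ComplexShape.up ℤ).prev m = m - 1 := by simp
  have hnext : (ComplexShape.up ℤ).next m = m + 1 := by simp
  have hmono : Mono (HomologicalComplex.homologyMap φ m) := by
    rw [HomologicalComplex.mono_homologyMap_iff_up_to_refinements φ (m - 1) m (m + 1) hprev hnext]
    intro A x₂ _ y₁ hxy
    let P : Submodule R (A × K.X (m - 1)) := LinearMap.eqLocus
      (x₂.hom ∘ₗ LinearMap.fst R A (K.X (m - 1)))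
      ((K.d (m - 1) m).hom ∘ₗ LinearMap.snd R A (K.X (m - 1)))
    refine ⟨ModuleCat.of R P, ModuleCat.ofHom (LinearMap.fst R A _ ∘ₗ P.subtype), ?_,
      ModuleCat.ofHom (LinearMap.snd R A _ ∘ₗ P.subtype), ?_⟩
    · rw [ModuleCat.epi_iff_surjective]
      intro a
      have ha : φ.f m (x₂ a) = L.d (m - 1) m (y₁ a) :=
        LinearMap.congr_fun (congrArg ModuleCat.Hom.hom hxy) a
      obtain ⟨x, z, hxz⟩ := h (m - 1) m (by ring) (y₁ a) (x₂ a) ha.symm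
      refine ⟨⟨(a, x), hinj m ?_⟩, rfl⟩
      change φ.f m (x₂ a) = φ.f m (K.d (m - 1) m x)
      rw [ha, hxz, map_add, hL, add_zero, hφ]
    · exact ModuleCat.hom_ext (LinearMap.ext fun p => p.2)
  have hepi : Epi (HomologicalComplex.homologyMap φ m) := by
    rw [HomologicalComplex.epi_homologyMap_iff_up_to_refinements φ (m - 1) m (m + 1) hprev hnext]
    intro A y₂ hy₂
    let P : Submodule R (A × K.X m × L.X (m - 1)) := LinearMap.eqLocus
      (y₂.hom ∘ₗ LinearMap.fst R A (K.X m × L.X (m - 1)))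
      (((φ.f m).hom.coprod (L.d (m - 1) m).hom) ∘ₗ LinearMap.snd R A (K.X m × L.X (m - 1)))
    refine ⟨ModuleCat.of R P, ModuleCat.ofHom (LinearMap.fst R A _ ∘ₗ P.subtype), ?_,
      ModuleCat.ofHom (LinearMap.fst R _ _ ∘ₗ LinearMap.snd R A _ ∘ₗ P.subtype), ?_,
      ModuleCat.ofHom (LinearMap.snd R _ _ ∘ₗ LinearMap.snd R A _ ∘ₗ P.subtype), ?_⟩
    · rw [ModuleCat.epi_iff_surjective]
      intro a
      have ha : L.d m (m + 1) (y₂ a) = 0 :=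
        LinearMap.congr_fun (congrArg ModuleCat.Hom.hom hy₂) a
      obtain ⟨x, z, hxz⟩ := h m (m + 1) rfl (y₂ a) 0 (by rw [ha, map_zero])
      exact ⟨⟨(a, x, z), hxz⟩, rfl⟩
    · refine ModuleCat.hom_ext (LinearMap.ext fun p => hinj _ ?_)
      have hp : y₂ p.1.1 = φ.f m p.1.2.1 + L.d (m - 1) m p.1.2.2 := p.2
      have ha : L.d m (m + 1) (y₂ p.1.1) = 0 :=
        LinearMap.congr_fun (congrArg ModuleCat.Hom.hom hy₂) p.1.1
      rw [hp, map_add, hL, add_zero, hφ] at ha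
      exact ha.trans (map_zero _).symm
    · exact ModuleCat.hom_ext (LinearMap.ext fun p => p.2)
  exact isIso_of_mono_of_epi _

variable {k : Type u} [Field k]
  (V : CosimplicialObject (CochainComplex (ModuleCat.{max u w} k) ℤ))

section SingleFamily

variable {V} {R : ℕ} {i₀ : ℤ}

/-- The family concentrated in form degree `R` and internal degree `i₀`. -/
def singleFamily (b : ∀ n : ℕ, Form k n R ⊗[k] comp V n i₀) : Family V := fun n =>
  Pi.single (M := fun p => ∀ i : ℤ, Form k n p ⊗[k] comp V n i) R
    (Pi.single (M := fun i => Form k n R ⊗[k] comp V n i) i₀ (b n))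

variable (b : ∀ n : ℕ, Form k n R ⊗[k] comp V n i₀)

lemma singleFamily_self (n : ℕ) : singleFamily b n R i₀ = b n := by
  rw [singleFamily, Pi.single_eq_same, Pi.single_eq_same]

lemma singleFamily_of_ne (n : ℕ) {p : ℕ} (hp : p ≠ R) (i : ℤ) : singleFamily b n p i = 0 := by
  rw [singleFamily, Pi.single_eq_of_ne hp]
  rfl

lemma singleFamily_of_ne' (n p : ℕ) {i : ℤ} (hi : i ≠ i₀) : singleFamily b n p i = 0 := by
  rcases eq_or_ne p R with rfl | hp
  · rw [singleFamily, Pi.single_eq_same, Pi.single_eq_of_ne hi]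
  · exact singleFamily_of_ne b n hp i

lemma singleFamily_mem {b : ∀ n : ℕ, Form k n R ⊗[k] comp V n i₀} (hb : Compatible b) {m : ℤ}
    (hm : (R : ℤ) + i₀ = m) : singleFamily b ∈ totSub V m := by
  refine ⟨fun n r i hr => ?_, fun p q f r i => ?_⟩
  · rcases eq_or_ne r R with rfl | h
    · exact singleFamily_of_ne' b n r (by rintro rfl; exact hr hm)
    · exact singleFamily_of_ne b n h i
  · rcases eq_or_ne r R with rfl | h
    · rcases eq_or_ne i i₀ with rfl | h'
      · rw [singleFamily_self, singleFamily_self, hb]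
      · rw [singleFamily_of_ne' b _ _ h', singleFamily_of_ne' b _ _ h', map_zero, map_zero]
    · rw [singleFamily_of_ne b _ h, singleFamily_of_ne b _ h, map_zero, map_zero]

end SingleFamily

lemma exists_sub_totD_eq_unitFamily [CharZero k]
    (hac : ∀ (i : ℤ) (j : ℕ), j ≠ 0 → Limits.IsZero ((cochains V i).homology j)) (m : ℤ) (R : ℕ) :
    ∀ y ∈ totSub V m, (∀ (n r : ℕ) (i : ℤ), R < r → y n r i = 0) →
      (∀ (n r : ℕ) (i : ℤ), totD V y n (r + 1) i = 0) →
      ∃ x ∈ kerSub V m, ∃ z ∈ totSub V (m - 1), y = unitFamily V m x + totD V z := by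
  induction R with
  | zero =>
    intro y hy hR hD
    obtain ⟨x, hx, hyx⟩ := Compatible.exists_ker_of_closed (a := fun n => y n 0 m)
      (fun p q f => hy.2 p q f 0 m) (fun n => by
        have := hD n 0 m
        rwa [totD_succ, hR n _ _ (Nat.succ_pos 0), map_zero, smul_zero, add_zero] at this)
    refine ⟨x, hx, 0, Submodule.zero_mem _, ?_⟩
    rw [map_zero, add_zero]
    funext n p i
    cases p with
    | zero =>
      rcases eq_or_ne i m with rfl | hi
      · rw [unitFamily_self]
        exact hyx n
      · rw [unitFamily_of_ne V hi]
        exact hy.1 n 0 i (by simpa using hi)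
    | succ p => exact hR n _ i (Nat.succ_pos p)
  | succ R ih =>
    intro y hy hR hD
    obtain ⟨b, hb, hby⟩ := Compatible.exists_deRham_eq (hac (m - (R + 1)))
      (a := fun n => y n (R + 1) (m - (R + 1))) (fun p q f => hy.2 p q f _ _) (fun n => by
        have := hD n (R + 1) (m - (R + 1))
        rwa [totD_succ, hR n _ _ (Nat.lt_succ_self _), map_zero, smul_zero, add_zero] at this)
    have hB : singleFamily b ∈ totSub V (m - 1) := singleFamily_mem hb (by ring)
    obtain ⟨x, hx, z, hz, hyz⟩ := ih (y - totD V (singleFamily b))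
      (Submodule.sub_mem _ hy (totD_mem V (by ring) _ hB))
      (fun n r i hr => by
        obtain ⟨r, rfl⟩ : ∃ r', r = r' + 1 := ⟨r - 1, by omega⟩
        change y n (r + 1) i - totD V (singleFamily b) n (r + 1) i = 0
        rw [totD_succ, singleFamily_of_ne b n (by omega : r + 1 ≠ R), map_zero, smul_zero, add_zero]
        rcases eq_or_ne r R with rfl | hne
        · rcases eq_or_ne i (m - (r + 1)) with rfl | hi
          · rw [singleFamily_self, hby, sub_self]
          · rw [singleFamily_of_ne' b n r hi, map_zero, sub_zero]
            exact hy.1 n _ i (by push_cast; omega)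
        · rw [singleFamily_of_ne b n hne, map_zero, sub_zero]
          exact hR n _ i (by omega))
      (fun n r i => by rw [map_sub, totD_totD, sub_zero]; exact hD n r i)
    refine ⟨x, hx, z + singleFamily b, Submodule.add_mem _ hz hB, ?_⟩
    rw [map_add, ← add_assoc, ← hyz, sub_add_cancel]

lemma unitFamily_injective (m : ℤ) : Function.Injective (unitFamily V m) := by
  intro x y hxy
  have h : unitFamily V m x 0 0 m = unitFamily V m y 0 0 m := by rw [hxy]
  rw [unitFamily_self, unitFamily_self] at h
  have h2 := congrArg (evalTensor 0) h
  rw [evalTensor_unit, evalTensor_unit] at h2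
  have hv : vertex 0 = 𝟙 (SimplexCategory.mk 0) := by
    ext j
    fin_cases j
    rfl
  rwa [hv, mapV_id, mapV_id] at h2

end CosimplicialTot

end

theorem ker_to_Tot_quasiIsomorphism {k : Type u} [Field k] [CharZero k]
    (V : CosimplicialObject (CochainComplex (ModuleCat.{max u w} k) ℤ))
    (hbdd : ∃ M : ℤ, ∀ (n : ℕ) (i : ℤ), i < M →
      Limits.IsZero ((V.obj (SimplexCategory.mk n)).X i))
    (hacyc : ∀ (i : ℤ) (j : ℕ), j ≠ 0 →
      Limits.IsZero (((AlgebraicTopology.alternatingCofaceMapComplex (ModuleCat.{max u w} k)).obj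
        (((CosimplicialObject.whiskering _ _).obj
          (HomologicalComplex.eval (ModuleCat.{max u w} k) (ComplexShape.up ℤ) i)).obj V)).homology
            j)) :
    QuasiIso (CosimplicialTot.kerToTot V) := by
  obtain ⟨M, hM⟩ := hbdd
  refine CosimplicialTot.quasiIso_of_forall_exists _ (fun m x y hxy => ?_) ?_
  · exact Subtype.ext (CosimplicialTot.unitFamily_injective V m (congrArg Subtype.val hxy))
  · intro m m' hm y x' hyx
    have hd (a b : ℤ) (hab : a + 1 = b) (z : (CosimplicialTot.Tot V).X a) :
        ((CosimplicialTot.Tot V).d a b z).1 = CosimplicialTot.totD V z.1 := by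
      have : (CosimplicialTot.Tot V).d a b = ModuleCat.ofHom
        ((CosimplicialTot.totD V).restrict (CosimplicialTot.totD_mem V hab)) := dif_pos hab
      rw [this]
      rfl
    have hD : CosimplicialTot.totD V y.1 = CosimplicialTot.unitFamily V m' x'.1 := by
      rw [← hd m m' hm, hyx]
      rfl
    obtain ⟨x, hx, z, hz, hyz⟩ := CosimplicialTot.exists_sub_totD_eq_unitFamily V hacyc m
      (m - M).toNat y.1 y.2
      (fun n r i hr => by
        by_cases hri : (r : ℤ) + i = m
        · have := ModuleCat.subsingleton_of_isZero (hM n i (by omega))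
          exact Subsingleton.elim _ _
        · exact y.2.1 n r i hri)
      (fun n r i => by rw [hD]; rfl)
    refine ⟨⟨x, hx⟩, ⟨z, hz⟩, Subtype.ext ?_⟩
    rw [hyz]
    exact congrArg _ (hd (m - 1) m (by ring) ⟨z, hz⟩).symm
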